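/- Assume lim_{s→t0⁺} a_l(s) = α_l with α_l ≠ 0 for every l = 2, …, n, and suppose |f_n(t, z1) − f_n(t, z2)| ≤ L_ρ |z1 − z2| for all t ∈ [t0,τ] and |z1|, |z2| ≤ ρ, for each ρ > 0. Let y : [t0,τ] → ℝ be a continuous function which is the output (first component) of at least one solution of the triangular system. Then for every R > 0 there exists a strictly decreasing sequence (t_ν)_{ν≥1} in (t0, τ] with lim_{ν→∞} t_ν = t0 and Ψ(t_ν) invertible for every ν, such that: for every solution x of the triangular system with x_1(t) = y(t) on [t0,τ] and ‖x‖_{[t0,τ]} < R, and every continuous z_1 : [t0, t_1] → ℝⁿ with ‖z_1‖_{[t0,t_1]} < R, the iterates z_{ν+1}(t) := F_{t_ν}(t; z_ν restricted to [t0,t_ν]), t ∈ [t0, t_ν], satisfy ‖z_{ν+1} − x‖_{[t0,t_ν]} ≤ 2^{−ν} ‖z_1 − x‖_{[t0,t_1]} for all ν ≥ 1; in particular lim_{ν→∞} z_ν(t_ν) = x(t0). -/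

import Mathlib

open MeasureTheory Matrix Set Filter Topology

noncomputable section

/-- `x` is a solution of `ẋ = A(t)x + g(t,x)` on `[t0, τ]` (integral form, componentwise). -/
def IsSolution (n : ℕ) (t0 τ : ℝ) (A : ℝ → Matrix (Fin n) (Fin n) ℝ)
    (g : ℝ → (Fin n → ℝ) → (Fin n → ℝ)) (x : ℝ → (Fin n → ℝ)) : Prop :=
  ContinuousOn x (Set.Icc t0 τ) ∧
    ∀ t ∈ Set.Icc t0 τ, ∀ i : Fin n,
      x t i = x t0 i + ∫ s in t0..t, ((A s).mulVec (x s) i + g s (x s) i)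

/-- `Φ` is the fundamental matrix of `ẋ = A(t)x` on `[t0, τ]`. -/
def IsFundamental (n : ℕ) (t0 τ : ℝ) (A : ℝ → Matrix (Fin n) (Fin n) ℝ)
    (Φ : ℝ → Matrix (Fin n) (Fin n) ℝ) : Prop :=
  (∀ i j : Fin n, ContinuousOn (fun t => Φ t i j) (Set.Icc t0 τ)) ∧
    ∀ t ∈ Set.Icc t0 τ, ∀ i j : Fin n,
      Φ t i j = (1 : Matrix (Fin n) (Fin n) ℝ) i j + ∫ s in t0..t, (A s * Φ s) i j

/-- `Ψ(t) = ∫_{t0}^t Φ(s)ᵀ C(s)ᵀ C(s) Φ(s) ds` (entrywise integral). -/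
def Psi (n k0 : ℕ) (t0 : ℝ) (C : ℝ → Matrix (Fin k0) (Fin n) ℝ)
    (Φ : ℝ → Matrix (Fin n) (Fin n) ℝ) (t : ℝ) : Matrix (Fin n) (Fin n) ℝ :=
  fun i j => ∫ s in t0..t, ((Φ s)ᵀ * (C s)ᵀ * C s * Φ s) i j

/-- `Ξ(t; z) = ∫_{t0}^t Φ(ρ)ᵀ C(ρ)ᵀ C(ρ) Φ(ρ) (∫_{t0}^ρ Φ(s)⁻¹ g(s, z(s)) ds) dρ`. -/
def Xi (n k0 : ℕ) (t0 : ℝ) (C : ℝ → Matrix (Fin k0) (Fin n) ℝ)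
    (Φ : ℝ → Matrix (Fin n) (Fin n) ℝ) (g : ℝ → (Fin n → ℝ) → (Fin n → ℝ))
    (z : ℝ → (Fin n → ℝ)) (t : ℝ) : Fin n → ℝ :=
  fun i => ∫ ρ in t0..t,
    ((Φ ρ)ᵀ * (C ρ)ᵀ * C ρ * Φ ρ).mulVec
      (fun i' => ∫ s in t0..ρ, ((Φ s)⁻¹).mulVec (g s (z s)) i') i

/-- The map `F_T(t; z)`. -/
def Fmap (n k0 : ℕ) (t0 : ℝ) (C : ℝ → Matrix (Fin k0) (Fin n) ℝ)
    (Φ : ℝ → Matrix (Fin n) (Fin n) ℝ) (g : ℝ → (Fin n → ℝ) → (Fin n → ℝ))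
    (y : ℝ → (Fin k0 → ℝ)) (T : ℝ) (z : ℝ → (Fin n → ℝ)) (t : ℝ) : Fin n → ℝ :=
  (Φ t).mulVec
      ((Psi n k0 t0 C Φ T)⁻¹.mulVec
        ((fun i => ∫ ρ in t0..T, ((Φ ρ)ᵀ * (C ρ)ᵀ).mulVec (y ρ) i)
          - Xi n k0 t0 C Φ g z T))
    + (Φ t).mulVec (fun i => ∫ ρ in t0..t, ((Φ ρ)⁻¹).mulVec (g ρ (z ρ)) i)

/-- supremum norm of `f` over `[a, b]`. -/
def supN (n : ℕ) (a b : ℝ) (f : ℝ → (Fin n → ℝ)) : ℝ :=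
  ⨆ t : Set.Icc a b, ‖f (t : ℝ)‖

/-- The triangular system matrix: `A(t)_{i,i+1} = a_{i+1}(t)` (1-based), zero elsewhere. -/
def triA (n : ℕ) (a : ℕ → ℝ → ℝ) (t : ℝ) : Matrix (Fin n) (Fin n) ℝ :=
  Matrix.of fun i j => if (j : ℕ) = (i : ℕ) + 1 then a ((i : ℕ) + 2) t else 0

/-- The output row vector `C = (1, 0, …, 0)`. -/
def triC (n : ℕ) : Matrix (Fin 1) (Fin n) ℝ :=
  Matrix.of fun _ j => if (j : ℕ) = 0 then 1 else 0

/-- The triangular vector field `g(t,x) = (f_1(t), …, f_{n-1}(t), f_n(t,x))ᵀ`. -/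
def triG (n : ℕ) (f : ℕ → ℝ → ℝ) (fn : ℝ → (Fin n → ℝ) → ℝ)
    (t : ℝ) (x : Fin n → ℝ) : Fin n → ℝ :=
  fun i => if (i : ℕ) = n - 1 then fn t x else f ((i : ℕ) + 1) t

/-- Regularity of the triangular data: `a_l`, `f_l` measurable and bounded on `[t0,τ]`,
`f_n` measurable in `t` and continuous in `x`. -/
def TriRegular (n : ℕ) (t0 τ : ℝ) (a f : ℕ → ℝ → ℝ)
    (fn : ℝ → (Fin n → ℝ) → ℝ) : Prop :=
  (∀ l, 2 ≤ l → l ≤ n → Measurable (a l)) ∧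
  (∀ l, 2 ≤ l → l ≤ n → ∃ M : ℝ, ∀ t ∈ Set.Icc t0 τ, |a l t| ≤ M) ∧
  (∀ l, 1 ≤ l → l ≤ n - 1 → Measurable (f l)) ∧
  (∀ l, 1 ≤ l → l ≤ n - 1 → ∃ M : ℝ, ∀ t ∈ Set.Icc t0 τ, |f l t| ≤ M) ∧
  (∀ v : Fin n → ℝ, Measurable fun t => fn t v) ∧
  (∀ t ∈ Set.Icc t0 τ, Continuous (fn t))

/-!
Fix a solution `x` with output `y`, a curve `z`, and a short interval `[t0, T]` with `h = T - t0`.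
Let `q` be the response, started at `0`, to the difference of the nonlinearities along `x` and `z`.
Variation of constants gives `F_T(·; z) - x = Φ w - q`, where `Ψ(T) w` is the adjoint of the
observation map applied to the output of `q`; that is, `w` is the least-squares fit of this output
by outputs of the homogeneous system, so the output energy of `Φ w` is at most that of `q`.

The difference of the nonlinearities only enters the last equation, so it reaches the output after
`n` integrations and the output of `q` is `O(hⁿ)`. On the other hand `Φ_{1j}(t)` behaves like
`γ_j (t - t0)^(j-1)` with `γ_j ≠ 0` because the limits `α_l` do not vanish. After rescaling time to
`[0, 1]` the output of `Φ w` is thus close to a polynomial with coefficients `γ_j w_j h^(j-1)`, and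
its energy dominates `h` times the square of their size. Comparing the two energies bounds `w` by
`O(h)` times the distance from `z` to `x`. Hence `F_T` halves this distance for every `T` close to
`t0`, and the intervals may shrink to `t0` while the iteration proceeds.
-/

section IntervalIntegral

variable {E : Type*} [NormedAddCommGroup E] {t0 T t : ℝ}

lemma intervalIntegrable_of_mem_Icc {p : ℝ → E} (hp : IntervalIntegrable p volume t0 T)
    (ht : t ∈ Icc t0 T) : IntervalIntegrable p volume t0 t :=
  hp.mono_set (uIcc_subset_uIcc_left (Icc_subset_uIcc ht))

lemma intervalIntegrable_of_norm_le {p : ℝ → E} {B : ℝ} (hT : t0 ≤ T)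
    (hp : AEStronglyMeasurable p (volume.restrict (Icc t0 T))) (hB : ∀ t ∈ Icc t0 T, ‖p t‖ ≤ B) :
    IntervalIntegrable p volume t0 T :=
  (intervalIntegrable_iff_integrableOn_Icc_of_le hT).2 <|
    IntegrableOn.of_bound measure_Icc_lt_top hp B (ae_restrict_of_forall_mem measurableSet_Icc hB)

lemma integral_congr_of_eqOn_Icc [NormedSpace ℝ E] (hT : t0 ≤ T) {p q : ℝ → E}
    (h : EqOn p q (Icc t0 T)) :
    ∫ s in t0..T, p s = ∫ s in t0..T, q s :=
  intervalIntegral.integral_congr (by rwa [uIcc_of_le hT])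

lemma continuousOn_integral_Icc [NormedSpace ℝ E] (hT : t0 ≤ T) {p : ℝ → E}
    (hp : IntervalIntegrable p volume t0 T) :
    ContinuousOn (fun t => ∫ s in t0..t, p s) (Icc t0 T) := by
  rw [← uIcc_of_le hT]
  exact intervalIntegral.continuousOn_primitive_interval' hp left_mem_uIcc

lemma mul_eq_add_integral {p q P Q : ℝ → ℝ}
    (hp : IntervalIntegrable p volume t0 T) (hq : IntervalIntegrable q volume t0 T)
    (hP : ∀ t ∈ Icc t0 T, P t = P t0 + ∫ s in t0..t, p s)
    (hQ : ∀ t ∈ Icc t0 T, Q t = Q t0 + ∫ s in t0..t, q s) (ht : t ∈ Icc t0 T) :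
    P t * Q t = P t0 * Q t0 + ∫ s in t0..t, (p s * Q s + P s * q s) := by
  have hp' := intervalIntegrable_of_mem_Icc hp ht
  have hq' := intervalIntegrable_of_mem_Icc hq ht
  have absCont (c : ℝ) {r : ℝ → ℝ} (hr : IntervalIntegrable r volume t0 t) :
      AbsolutelyContinuousOnInterval (fun u => c + ∫ s in t0..u, r s) t0 t :=
    contDiff_const.contDiffOn.absolutelyContinuousOnInterval.add
      (hr.absolutelyContinuousOnInterval_intervalIntegral left_mem_uIcc)
  have key := (absCont (P t0) hp').integral_deriv_mul_eq_sub (absCont (Q t0) hq')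
  rw [← hP t ht, ← hQ t ht] at key
  simp only [intervalIntegral.integral_same, add_zero] at key
  rw [← sub_eq_iff_eq_add', ← key]
  apply intervalIntegral.integral_congr_ae
  filter_upwards [hp'.ae_hasDerivAt_integral, hq'.ae_hasDerivAt_integral] with s hPs hQs hs
  have hs' : s ∈ uIcc t0 t := uIoc_subset_uIcc hs
  rw [((hPs hs' t0 left_mem_uIcc).const_add _).deriv,
    ((hQs hs' t0 left_mem_uIcc).const_add _).deriv]
  rw [uIcc_of_le ht.1] at hs'
  rw [← hP s ⟨hs'.1, hs'.2.trans ht.2⟩, ← hQ s ⟨hs'.1, hs'.2.trans ht.2⟩]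

lemma eq_zero_of_norm_le_integral_norm {K : ℝ} {d : ℝ → E} (hd : ContinuousOn d (Icc t0 T))
    (h : ∀ t ∈ Icc t0 T, ‖d t‖ ≤ K * ∫ s in t0..t, ‖d s‖) (ht : t ∈ Icc t0 T) : d t = 0 := by
  have hT : t0 ≤ T := ht.1.trans ht.2
  have hint : IntervalIntegrable (fun s => ‖d s‖) volume t0 T :=
    hd.norm.intervalIntegrable_of_Icc hT
  have hderiv : ∀ s ∈ Ico t0 T,
      HasDerivWithinAt (fun t => ∫ s in t0..t, ‖d s‖) ‖d s‖ (Ici s) s := by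
    intro s hs
    have hcont : ContinuousWithinAt (fun s => ‖d s‖) (Ioi s) s :=
      (hd.norm s (Ico_subset_Icc_self hs)).mono_of_mem_nhdsWithin
        (mem_of_superset (Ioo_mem_nhdsGT hs.2) fun r hr => ⟨hs.1.trans hr.1.le, hr.2.le⟩)
    have hmeas : StronglyMeasurableAtFilter (fun s => ‖d s‖) (𝓝[>] s) :=
      ⟨Ioo s T, Ioo_mem_nhdsGT hs.2, (hd.norm.mono fun r hr =>
        ⟨hs.1.trans hr.1.le, hr.2.le⟩).aestronglyMeasurable measurableSet_Ioo⟩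
    exact intervalIntegral.integral_hasDerivWithinAt_right
      (intervalIntegrable_of_mem_Icc hint (Ico_subset_Icc_self hs)) hmeas hcont
  have hzero : ∫ s in t0..t, ‖d s‖ = 0 :=
    eq_zero_of_abs_deriv_le_mul_abs_self_of_eq_zero_right (K := K)
      (continuousOn_integral_Icc hT hint) hderiv intervalIntegral.integral_same
      (fun s hs => by
        rw [norm_norm, Real.norm_of_nonneg
          (intervalIntegral.integral_nonneg hs.1 fun _ _ => norm_nonneg _)]
        exact h s (Ico_subset_Icc_self hs)) t ht
  simpa [hzero] using h t ht

end IntervalIntegral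

section Measurability

lemma aemeasurable_comp_of_continuous {α E F : Type*} [MeasurableSpace α] {μ : Measure α}
    [TopologicalSpace E] [TopologicalSpace.MetrizableSpace E] [SecondCountableTopology E]
    [MeasurableSpace E] [BorelSpace E] [TopologicalSpace F]
    [TopologicalSpace.PseudoMetrizableSpace F] [MeasurableSpace F] [BorelSpace F] [Zero F]
    {s : Set α} (hs : MeasurableSet s) {u : α → E → F} (hu : ∀ v, Measurable fun t => u t v)
    (hc : ∀ t ∈ s, Continuous (u t)) {z : α → E} (hz : AEMeasurable z (μ.restrict s)) :
    AEMeasurable (fun t => u t (z t)) (μ.restrict s) := by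
  have hmeas : Measurable (Function.uncurry fun v => s.indicator fun t => u t v) := by
    refine measurable_uncurry_of_continuous_of_measurable (fun t => ?_)
      fun v => (hu v).indicator hs
    by_cases ht : t ∈ s
    · simpa only [Set.indicator_of_mem ht] using hc t ht
    · simpa only [Set.indicator_of_notMem ht] using continuous_const
  refine (hmeas.comp_aemeasurable (hz.prodMk aemeasurable_id)).congr ?_
  filter_upwards [ae_restrict_mem hs] with t ht
  exact Set.indicator_of_mem ht fun r => u r (z t)

end Measurability

section MatrixFunctions

variable {m n : Type*} [Fintype n] {t0 T : ℝ} {M : ℝ → Matrix m n ℝ} {v : ℝ → n → ℝ}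

lemma continuousOn_mulVec {s : Set ℝ} (hM : ContinuousOn M s) (hv : ContinuousOn v s) :
    ContinuousOn (fun t => M t *ᵥ v t) s :=
  (continuous_fst.matrix_mulVec continuous_snd).comp_continuousOn (hM.prodMk hv)

open scoped Matrix.Norms.Operator in
lemma exists_norm_mulVec_le_of_continuousOn [Fintype m] {s : Set ℝ} (hs : IsCompact s)
    (hM : ContinuousOn M s) : ∃ K ≥ 0, ∀ t ∈ s, ∀ w, ‖M t *ᵥ w‖ ≤ K * ‖w‖ := by
  obtain ⟨K, hK⟩ := hs.exists_bound_of_continuousOn hM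
  exact ⟨|K|, abs_nonneg K, fun t ht w => (Matrix.linfty_opNorm_mulVec _ _).trans
    (mul_le_mul_of_nonneg_right ((hK t ht).trans (le_abs_self K)) (norm_nonneg _))⟩

lemma intervalIntegrable_mulVec_of_continuousOn_left (hT : t0 ≤ T)
    (hM : ContinuousOn M (Icc t0 T)) (hv : ∀ j, IntervalIntegrable (fun s => v s j) volume t0 T)
    (i : m) : IntervalIntegrable (fun s => (M s *ᵥ v s) i) volume t0 T := by
  rw [← uIcc_of_le hT] at hM
  simpa [Matrix.mulVec, dotProduct, Finset.sum_fn] using IntervalIntegrable.sum Finset.univ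
    fun j _ => (hv j).continuousOn_mul (continuousOn_pi.1 (continuousOn_pi.1 hM i) j)

lemma intervalIntegrable_mulVec_of_continuousOn_right (hT : t0 ≤ T)
    (hM : ∀ i j, IntervalIntegrable (fun s => M s i j) volume t0 T)
    (hv : ContinuousOn v (Icc t0 T)) (i : m) :
    IntervalIntegrable (fun s => (M s *ᵥ v s) i) volume t0 T := by
  rw [← uIcc_of_le hT] at hv
  simpa [Matrix.mulVec, dotProduct, Finset.sum_fn] using IntervalIntegrable.sum Finset.univ
    fun j _ => (hM i j).mul_continuousOn (continuousOn_pi.1 hv j)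

lemma continuousOn_inv_of_isUnit [DecidableEq n] {N : ℝ → Matrix n n ℝ} {s : Set ℝ}
    (hN : ContinuousOn N s) (hu : ∀ t ∈ s, IsUnit (N t)) : ContinuousOn (fun t => (N t)⁻¹) s := by
  simp only [Matrix.inv_def, Ring.inverse_eq_inv']
  exact (((continuous_id.matrix_det).comp_continuousOn hN).inv₀ fun t ht =>
    ((Matrix.isUnit_iff_isUnit_det _).1 (hu t ht)).ne_zero).smul
      ((continuous_id.matrix_adjugate).comp_continuousOn hN)

lemma mulVec_eq_add_integral (hT : t0 ≤ T) {M' : ℝ → Matrix m n ℝ} {v' : ℝ → n → ℝ}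
    (hM' : ∀ i j, IntervalIntegrable (fun s => M' s i j) volume t0 T)
    (hv' : ∀ j, IntervalIntegrable (fun s => v' s j) volume t0 T)
    (hM : ∀ t ∈ Icc t0 T, ∀ i j, M t i j = M t0 i j + ∫ s in t0..t, M' s i j)
    (hv : ∀ t ∈ Icc t0 T, ∀ j, v t j = v t0 j + ∫ s in t0..t, v' s j)
    {t : ℝ} (ht : t ∈ Icc t0 T) (i : m) :
    (M t *ᵥ v t) i = (M t0 *ᵥ v t0) i + ∫ s in t0..t, (M' s *ᵥ v s + M s *ᵥ v' s) i := by
  have hMc (j : n) : ContinuousOn (fun s => M s i j) (uIcc t0 T) := by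
    rw [uIcc_of_le hT]
    exact (continuousOn_const.add (continuousOn_integral_Icc hT (hM' i j))).congr
      fun s hs => hM s hs i j
  have hvc (j : n) : ContinuousOn (fun s => v s j) (uIcc t0 T) := by
    rw [uIcc_of_le hT]
    exact (continuousOn_const.add (continuousOn_integral_Icc hT (hv' j))).congr
      fun s hs => hv s hs j
  have hint (j : n) :
      IntervalIntegrable (fun s => M' s i j * v s j + M s i j * v' s j) volume t0 t :=
    intervalIntegrable_of_mem_Icc
      (((hM' i j).mul_continuousOn (hvc j)).add ((hv' j).continuousOn_mul (hMc j))) ht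
  calc (M t *ᵥ v t) i
      = ∑ j, (M t0 i j * v t0 j + ∫ s in t0..t, (M' s i j * v s j + M s i j * v' s j)) :=
        Finset.sum_congr rfl fun j _ => mul_eq_add_integral (hM' i j) (hv' j)
          (fun s hs => hM s hs i j) (fun s hs => hv s hs j) ht
    _ = (M t0 *ᵥ v t0) i + ∫ s in t0..t, (M' s *ᵥ v s + M s *ᵥ v' s) i := by
        rw [Finset.sum_add_distrib, ← intervalIntegral.integral_finsetSum fun j _ => hint j]
        simp only [Matrix.mulVec, dotProduct, Pi.add_apply, Finset.sum_add_distrib]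

end MatrixFunctions

section LinearSystem

variable {n : ℕ} {t0 τ T K : ℝ} {A Φ : ℝ → Matrix (Fin n) (Fin n) ℝ} {b : ℝ → Fin n → ℝ}
  {g : ℝ → (Fin n → ℝ) → Fin n → ℝ} {x u : ℝ → Fin n → ℝ}

lemma IsSolution.mono (hx : IsSolution n t0 τ A g x) (hT : T ≤ τ) : IsSolution n t0 T A g x :=
  ⟨hx.1.mono (Icc_subset_Icc_right hT), fun t ht => hx.2 t (Icc_subset_Icc_right hT ht)⟩

lemma IsFundamental.mono (hΦ : IsFundamental n t0 τ A Φ) (hT : T ≤ τ) :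
    IsFundamental n t0 T A Φ :=
  ⟨fun i j => (hΦ.1 i j).mono (Icc_subset_Icc_right hT),
    fun t ht => hΦ.2 t (Icc_subset_Icc_right hT ht)⟩

lemma IsFundamental.continuousOn (hΦ : IsFundamental n t0 τ A Φ) : ContinuousOn Φ (Icc t0 τ) :=
  continuousOn_pi.2 fun i => continuousOn_pi.2 fun j => hΦ.1 i j

lemma IsFundamental.apply_left (hΦ : IsFundamental n t0 τ A Φ) (hτ : t0 ≤ τ) : Φ t0 = 1 := by
  ext i j
  simpa using hΦ.2 t0 (left_mem_Icc.2 hτ) i j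

/-- The response at time `t` of the system with fundamental matrix `Φ` to the forcing `b`, started
at `0` at time `t0`: the last term of `Fmap`, with `b s = g s (z s)`. -/
def forcedResponse (Φ : ℝ → Matrix (Fin n) (Fin n) ℝ) (t0 : ℝ) (b : ℝ → Fin n → ℝ) (t : ℝ) :
    Fin n → ℝ :=
  Φ t *ᵥ fun i => ∫ s in t0..t, ((Φ s)⁻¹ *ᵥ b s) i

lemma forcedResponse_apply_left : forcedResponse Φ t0 b t0 = 0 := by
  simp only [forcedResponse, intervalIntegral.integral_same]
  exact Matrix.mulVec_zero _

lemma IsSolution.eq_of_apply_left_eq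
    (hA : ∀ i j, IntervalIntegrable (fun s => A s i j) volume t0 T)
    (hK : ∀ s ∈ Icc t0 T, ∀ v, ‖A s *ᵥ v‖ ≤ K * ‖v‖)
    (hb : ∀ i, IntervalIntegrable (fun s => b s i) volume t0 T)
    (hx : IsSolution n t0 T A (fun s _ => b s) x) (hu : IsSolution n t0 T A (fun s _ => b s) u)
    (h0 : x t0 = u t0) {t : ℝ} (ht : t ∈ Icc t0 T) : x t = u t := by
  have hT : t0 ≤ T := ht.1.trans ht.2
  have hAint {w : ℝ → Fin n → ℝ} (hw : ContinuousOn w (Icc t0 T)) (i : Fin n) :=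
    intervalIntegrable_mulVec_of_continuousOn_right hT hA hw i
  refine sub_eq_zero.1 (eq_zero_of_norm_le_integral_norm (K := K) (hx.1.sub hu.1) ?_ ht)
  intro t ht
  have hnorm : IntervalIntegrable (fun s => ‖x s - u s‖) volume t0 t :=
    intervalIntegrable_of_mem_Icc ((hx.1.sub hu.1).norm.intervalIntegrable_of_Icc hT) ht
  rw [← intervalIntegral.integral_const_mul]
  have hAd (s : ℝ) (hs : s ∈ Icc t0 t) : ‖A s *ᵥ (x s - u s)‖ ≤ K * ‖x s - u s‖ :=
    hK s ⟨hs.1, hs.2.trans ht.2⟩ _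
  refine (pi_norm_le_iff_of_nonneg (intervalIntegral.integral_nonneg ht.1
    fun s hs => (norm_nonneg _).trans (hAd s hs))).2 fun i => ?_
  have hdiff : (x t - u t) i = ∫ s in t0..t, (A s *ᵥ (x s - u s)) i := by
    rw [Pi.sub_apply, hx.2 t ht i, hu.2 t ht i, h0, add_sub_add_left_eq_sub,
      ← intervalIntegral.integral_sub
        (intervalIntegrable_of_mem_Icc ((hAint hx.1 i).add (hb i)) ht)
        (intervalIntegrable_of_mem_Icc ((hAint hu.1 i).add (hb i)) ht)]
    simp only [add_sub_add_right_eq_sub, Matrix.mulVec_sub, Pi.sub_apply]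
  change ‖(x t - u t) i‖ ≤ _
  rw [hdiff]
  exact intervalIntegral.norm_integral_le_of_norm_le ht.1
    (ae_of_all _ fun s hs => (norm_le_pi_norm _ i).trans (hAd s (Ioc_subset_Icc_self hs)))
    (hnorm.const_mul K)

lemma IsFundamental.isSolution_add_forcedResponse (hT : t0 ≤ T)
    (hA : ∀ i j, IntervalIntegrable (fun s => A s i j) volume t0 T)
    (hΦ : IsFundamental n t0 T A Φ) (hu : ∀ t ∈ Icc t0 T, IsUnit (Φ t))
    (hb : ∀ i, IntervalIntegrable (fun s => b s i) volume t0 T) (c : Fin n → ℝ) :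
    IsSolution n t0 T A (fun s _ => b s) fun t => Φ t *ᵥ c + forcedResponse Φ t0 b t := by
  set V : ℝ → Fin n → ℝ := fun t => c + fun i => ∫ s in t0..t, ((Φ s)⁻¹ *ᵥ b s) i
  have hΦV (t : ℝ) : Φ t *ᵥ c + forcedResponse Φ t0 b t = Φ t *ᵥ V t :=
    (Matrix.mulVec_add _ _ _).symm
  have hforce := intervalIntegrable_mulVec_of_continuousOn_left hT
    (continuousOn_inv_of_isUnit hΦ.continuousOn hu) hb
  have hAΦ (i j : Fin n) : IntervalIntegrable (fun s => (A s * Φ s) i j) volume t0 T :=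
    intervalIntegrable_mulVec_of_continuousOn_right hT hA
      (v := fun s => (Φ s).col j) (continuousOn_pi.2 fun k => hΦ.1 k j) i
  have hV0 : V t0 = c := by ext i; simp [V]
  have hVcont : ContinuousOn V (Icc t0 T) :=
    continuousOn_const.add (continuousOn_pi.2 fun i => continuousOn_integral_Icc hT (hforce i))
  simp only [hΦV]
  refine ⟨continuousOn_mulVec hΦ.continuousOn hVcont, fun t ht i => ?_⟩
  refine (mulVec_eq_add_integral hT hAΦ hforce
    (fun t ht i j => by rw [hΦ.apply_left hT]; exact hΦ.2 t ht i j)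
    (fun t _ j => by rw [hV0]; rfl) ht i).trans
      (congrArg _ (integral_congr_of_eqOn_Icc ht.1 fun s hs => ?_))
  have hdet := (Matrix.isUnit_iff_isUnit_det _).1 (hu s ⟨hs.1, hs.2.trans ht.2⟩)
  simp only [Pi.add_apply, Matrix.mulVec_mulVec, Matrix.mul_nonsing_inv _ hdet, Matrix.one_mulVec]

lemma IsFundamental.isSolution_forcedResponse (hT : t0 ≤ T)
    (hA : ∀ i j, IntervalIntegrable (fun s => A s i j) volume t0 T)
    (hΦ : IsFundamental n t0 T A Φ) (hu : ∀ t ∈ Icc t0 T, IsUnit (Φ t))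
    (hb : ∀ i, IntervalIntegrable (fun s => b s i) volume t0 T) :
    IsSolution n t0 T A (fun s _ => b s) (forcedResponse Φ t0 b) := by
  simpa using hΦ.isSolution_add_forcedResponse hT hA hu hb 0

lemma IsSolution.eq_add_forcedResponse
    (hA : ∀ i j, IntervalIntegrable (fun s => A s i j) volume t0 T)
    (hK : ∀ s ∈ Icc t0 T, ∀ v, ‖A s *ᵥ v‖ ≤ K * ‖v‖)
    (hΦ : IsFundamental n t0 T A Φ) (hu : ∀ t ∈ Icc t0 T, IsUnit (Φ t))
    (hx : IsSolution n t0 T A g x)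
    (hb : ∀ i, IntervalIntegrable (fun s => g s (x s) i) volume t0 T) {t : ℝ}
    (ht : t ∈ Icc t0 T) :
    x t = Φ t *ᵥ x t0 + forcedResponse Φ t0 (fun s => g s (x s)) t := by
  have hT : t0 ≤ T := ht.1.trans ht.2
  refine IsSolution.eq_of_apply_left_eq (b := fun s => g s (x s)) hA hK hb hx
    (hΦ.isSolution_add_forcedResponse hT hA hu hb (x t0)) ?_ ht
  rw [hΦ.apply_left hT, Matrix.one_mulVec, forcedResponse_apply_left, add_zero]

lemma forcedResponse_sub (hT : t0 ≤ T) (hΦ : ContinuousOn Φ (Icc t0 T))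
    (hu : ∀ t ∈ Icc t0 T, IsUnit (Φ t)) {b₁ b₂ : ℝ → Fin n → ℝ}
    (h₁ : ∀ i, IntervalIntegrable (fun s => b₁ s i) volume t0 T)
    (h₂ : ∀ i, IntervalIntegrable (fun s => b₂ s i) volume t0 T) {t : ℝ} (ht : t ∈ Icc t0 T) :
    forcedResponse Φ t0 (fun s => b₁ s - b₂ s) t =
      forcedResponse Φ t0 b₁ t - forcedResponse Φ t0 b₂ t := by
  have hint {b : ℝ → Fin n → ℝ} (hb : ∀ i, IntervalIntegrable (fun s => b s i) volume t0 T)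
      (i : Fin n) :=
    intervalIntegrable_of_mem_Icc (intervalIntegrable_mulVec_of_continuousOn_left hT
      (continuousOn_inv_of_isUnit hΦ hu) hb i) ht
  simp only [forcedResponse, Matrix.mulVec_sub, Pi.sub_apply,
    intervalIntegral.integral_sub (hint h₁ _) (hint h₂ _)]
  exact Matrix.mulVec_sub _ _ _

end LinearSystem

section Observation

variable {n k0 : ℕ} {t0 T : ℝ} {A Φ : ℝ → Matrix (Fin n) (Fin n) ℝ}
  {C : ℝ → Matrix (Fin k0) (Fin n) ℝ} {g : ℝ → (Fin n → ℝ) → Fin n → ℝ}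
  {x z : ℝ → Fin n → ℝ} {p p₁ p₂ : ℝ → Fin k0 → ℝ} {w : Fin n → ℝ}

/-- The adjoint of the observation map `w ↦ (ρ ↦ C(ρ)Φ(ρ)w)` from `ℝⁿ` to signals on `[t0, T]`,
applied to the signal `p`. Composed with the observation map itself it gives `Psi`. -/
def obsAdjoint (C : ℝ → Matrix (Fin k0) (Fin n) ℝ) (Φ : ℝ → Matrix (Fin n) (Fin n) ℝ)
    (t0 T : ℝ) (p : ℝ → Fin k0 → ℝ) : Fin n → ℝ :=
  fun i => ∫ ρ in t0..T, (((Φ ρ)ᵀ * (C ρ)ᵀ) *ᵥ p ρ) i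

lemma Xi_eq_obsAdjoint :
    Xi n k0 t0 C Φ g z T =
      obsAdjoint C Φ t0 T fun ρ => C ρ *ᵥ forcedResponse Φ t0 (fun s => g s (z s)) ρ := by
  ext i
  simp only [Xi, obsAdjoint, forcedResponse, Matrix.mulVec_mulVec, Matrix.mul_assoc]

lemma obsAdjoint_congr (hT : t0 ≤ T) (h : EqOn p₁ p₂ (Icc t0 T)) :
    obsAdjoint C Φ t0 T p₁ = obsAdjoint C Φ t0 T p₂ := by
  ext i
  exact integral_congr_of_eqOn_Icc hT fun ρ hρ => by simp only [h hρ]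

lemma intervalIntegrable_obsAdjoint (hT : t0 ≤ T) (hC : ContinuousOn C (Icc t0 T))
    (hΦ : ContinuousOn Φ (Icc t0 T)) (hp : ContinuousOn p (Icc t0 T)) (i : Fin n) :
    IntervalIntegrable (fun ρ => (((Φ ρ)ᵀ * (C ρ)ᵀ) *ᵥ p ρ) i) volume t0 T := by
  simp only [← Matrix.transpose_mul]
  have hCΦ : ContinuousOn (fun ρ => (C ρ * Φ ρ)ᵀ) (Icc t0 T) :=
    ((continuous_fst.matrix_mul continuous_snd).matrix_transpose).comp_continuousOn (hC.prodMk hΦ)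
  exact (continuousOn_pi.1 (continuousOn_mulVec hCΦ hp) i).intervalIntegrable_of_Icc hT

lemma obsAdjoint_sub (hT : t0 ≤ T) (hC : ContinuousOn C (Icc t0 T))
    (hΦ : ContinuousOn Φ (Icc t0 T)) (h₁ : ContinuousOn p₁ (Icc t0 T))
    (h₂ : ContinuousOn p₂ (Icc t0 T)) :
    obsAdjoint C Φ t0 T (fun ρ => p₁ ρ - p₂ ρ) =
      obsAdjoint C Φ t0 T p₁ - obsAdjoint C Φ t0 T p₂ := by
  ext i
  simp only [obsAdjoint, Matrix.mulVec_sub, Pi.sub_apply]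
  exact intervalIntegral.integral_sub (intervalIntegrable_obsAdjoint hT hC hΦ h₁ i)
    (intervalIntegrable_obsAdjoint hT hC hΦ h₂ i)

lemma dotProduct_obsAdjoint (hT : t0 ≤ T) (hC : ContinuousOn C (Icc t0 T))
    (hΦ : ContinuousOn Φ (Icc t0 T)) (hp : ContinuousOn p (Icc t0 T)) :
    w ⬝ᵥ obsAdjoint C Φ t0 T p = ∫ ρ in t0..T, (C ρ *ᵥ (Φ ρ *ᵥ w)) ⬝ᵥ p ρ := by
  have hpair (ρ : ℝ) :
      (C ρ *ᵥ (Φ ρ *ᵥ w)) ⬝ᵥ p ρ = ∑ i, w i * (((Φ ρ)ᵀ * (C ρ)ᵀ) *ᵥ p ρ) i := by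
    rw [← Matrix.transpose_mul, Matrix.mulVec_mulVec, dotProduct_comm, Matrix.dotProduct_mulVec,
      ← Matrix.mulVec_transpose, dotProduct_comm]
    rfl
  simp only [hpair]
  simp only [dotProduct, obsAdjoint]
  rw [intervalIntegral.integral_finsetSum fun i _ =>
    (intervalIntegrable_obsAdjoint hT hC hΦ hp i).const_mul _]
  simp only [intervalIntegral.integral_const_mul]

lemma Psi_mulVec (hT : t0 ≤ T) (hC : ContinuousOn C (Icc t0 T)) (hΦ : ContinuousOn Φ (Icc t0 T)) :
    Psi n k0 t0 C Φ T *ᵥ w = obsAdjoint C Φ t0 T fun ρ => C ρ *ᵥ (Φ ρ *ᵥ w) := by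
  have hcol (i j : Fin n) :
      IntervalIntegrable (fun ρ => ((Φ ρ)ᵀ * (C ρ)ᵀ * C ρ * Φ ρ) i j) volume t0 T := by
    have h := intervalIntegrable_obsAdjoint hT hC hΦ (continuousOn_mulVec hC
      (v := fun ρ => (Φ ρ).col j)
      (continuousOn_pi.2 fun k => continuousOn_pi.1 (continuousOn_pi.1 hΦ k) j)) i
    simp only [Matrix.mulVec_mulVec] at h
    exact h
  ext i
  simp only [obsAdjoint, Matrix.mulVec_mulVec, ← Matrix.mul_assoc]
  simp only [Matrix.mulVec, dotProduct, Psi]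
  rw [intervalIntegral.integral_finsetSum fun j _ => (hcol i j).mul_const _]
  simp only [intervalIntegral.integral_mul_const]

lemma isUnit_Psi_of_integral_pos (hT : t0 ≤ T) (hC : ContinuousOn C (Icc t0 T))
    (hΦ : ContinuousOn Φ (Icc t0 T))
    (hpos : ∀ w ≠ 0, 0 < ∫ ρ in t0..T, (C ρ *ᵥ (Φ ρ *ᵥ w)) ⬝ᵥ (C ρ *ᵥ (Φ ρ *ᵥ w))) :
    IsUnit (Psi n k0 t0 C Φ T) := by
  rw [Matrix.isUnit_iff_isUnit_det, isUnit_iff_ne_zero]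
  intro hdet
  obtain ⟨w, hw, hΨw⟩ := Matrix.exists_mulVec_eq_zero_iff.2 hdet
  refine (hpos w hw).ne' ?_
  rw [← dotProduct_obsAdjoint hT hC hΦ (continuousOn_mulVec hC
    (continuousOn_mulVec hΦ continuousOn_const)), ← Psi_mulVec hT hC hΦ, hΨw, dotProduct_zero]

lemma integral_dotProduct_self_le_of_eq (hT : t0 ≤ T) (h₁ : ContinuousOn p₁ (Icc t0 T))
    (h₂ : ContinuousOn p₂ (Icc t0 T))
    (h : ∫ ρ in t0..T, p₁ ρ ⬝ᵥ p₁ ρ = ∫ ρ in t0..T, p₁ ρ ⬝ᵥ p₂ ρ) :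
    ∫ ρ in t0..T, p₁ ρ ⬝ᵥ p₁ ρ ≤ ∫ ρ in t0..T, p₂ ρ ⬝ᵥ p₂ ρ := by
  have hint {q₁ q₂ : ℝ → Fin k0 → ℝ} (hq₁ : ContinuousOn q₁ (Icc t0 T))
      (hq₂ : ContinuousOn q₂ (Icc t0 T)) :
      IntervalIntegrable (fun ρ => q₁ ρ ⬝ᵥ q₂ ρ) volume t0 T :=
    ((continuous_fst.dotProduct continuous_snd).comp_continuousOn
      (hq₁.prodMk hq₂)).intervalIntegrable_of_Icc hT
  have hsq : 0 ≤ ∫ ρ in t0..T, (p₁ ρ - p₂ ρ) ⬝ᵥ (p₁ ρ - p₂ ρ) :=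
    intervalIntegral.integral_nonneg hT fun ρ _ =>
      Finset.sum_nonneg fun i _ => mul_self_nonneg _
  have hexpand (ρ : ℝ) : (p₁ ρ - p₂ ρ) ⬝ᵥ (p₁ ρ - p₂ ρ) =
      p₁ ρ ⬝ᵥ p₁ ρ - 2 * p₁ ρ ⬝ᵥ p₂ ρ + p₂ ρ ⬝ᵥ p₂ ρ := by
    rw [dotProduct_sub, sub_dotProduct, sub_dotProduct, dotProduct_comm (p₂ ρ) (p₁ ρ)]
    ring
  simp only [hexpand] at hsq
  rw [intervalIntegral.integral_add ((hint h₁ h₁).sub ((hint h₁ h₂).const_mul 2)) (hint h₂ h₂),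
    intervalIntegral.integral_sub (hint h₁ h₁) ((hint h₁ h₂).const_mul 2),
    intervalIntegral.integral_const_mul] at hsq
  linarith

lemma exists_Fmap_sub_eq (hT : t0 ≤ T) (hC : ContinuousOn C (Icc t0 T))
    (hA : ∀ i j, IntervalIntegrable (fun s => A s i j) volume t0 T) {K : ℝ}
    (hK : ∀ s ∈ Icc t0 T, ∀ v, ‖A s *ᵥ v‖ ≤ K * ‖v‖)
    (hΦ : IsFundamental n t0 T A Φ) (hu : ∀ t ∈ Icc t0 T, IsUnit (Φ t))
    (hΨ : IsUnit (Psi n k0 t0 C Φ T)) (hx : IsSolution n t0 T A g x)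
    (hgx : ∀ i, IntervalIntegrable (fun s => g s (x s) i) volume t0 T)
    (hgz : ∀ i, IntervalIntegrable (fun s => g s (z s) i) volume t0 T)
    {y : ℝ → Fin k0 → ℝ} (hy : ∀ ρ ∈ Icc t0 T, C ρ *ᵥ x ρ = y ρ) {q : ℝ → Fin n → ℝ}
    (hq : q = forcedResponse Φ t0 fun s => g s (x s) - g s (z s)) :
    ∃ w, (∀ t ∈ Icc t0 T, Fmap n k0 t0 C Φ g y T z t - x t = Φ t *ᵥ w - q t) ∧
      Psi n k0 t0 C Φ T *ᵥ w = obsAdjoint C Φ t0 T fun ρ => C ρ *ᵥ q ρ := by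
  set r := forcedResponse Φ t0 fun s => g s (z s)
  have hq_eq {t : ℝ} (ht : t ∈ Icc t0 T) : q t = x t - Φ t *ᵥ x t0 - r t := by
    rw [hq, forcedResponse_sub hT hΦ.continuousOn hu hgx hgz ht,
      hx.eq_add_forcedResponse hA hK hΦ hu hgx ht, add_sub_cancel_left]
  have hyc : ContinuousOn y (Icc t0 T) :=
    (continuousOn_mulVec hC hx.1).congr fun ρ hρ => (hy ρ hρ).symm
  have hCr : ContinuousOn (fun ρ => C ρ *ᵥ r ρ) (Icc t0 T) :=
    continuousOn_mulVec hC (hΦ.isSolution_forcedResponse hT hA hu hgz).1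
  have hCΦ : ContinuousOn (fun ρ => C ρ *ᵥ (Φ ρ *ᵥ x t0)) (Icc t0 T) :=
    continuousOn_mulVec hC (continuousOn_mulVec hΦ.continuousOn continuousOn_const)
  set c := (Psi n k0 t0 C Φ T)⁻¹ *ᵥ (obsAdjoint C Φ t0 T y - Xi n k0 t0 C Φ g z T)
  refine ⟨c - x t0, fun t ht => ?_, ?_⟩
  · change Φ t *ᵥ c + r t - x t = _
    rw [hq_eq ht, Matrix.mulVec_sub]
    abel
  calc Psi n k0 t0 C Φ T *ᵥ (c - x t0)
      = obsAdjoint C Φ t0 T y - obsAdjoint C Φ t0 T (fun ρ => C ρ *ᵥ r ρ) -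
          obsAdjoint C Φ t0 T fun ρ => C ρ *ᵥ (Φ ρ *ᵥ x t0) := by
        rw [Matrix.mulVec_sub, Matrix.mulVec_mulVec, Matrix.mul_nonsing_inv _
          ((Matrix.isUnit_iff_isUnit_det _).1 hΨ), Matrix.one_mulVec, Xi_eq_obsAdjoint,
          Psi_mulVec hT hC hΦ.continuousOn]
    _ = obsAdjoint C Φ t0 T fun ρ => C ρ *ᵥ q ρ := by
        rw [← obsAdjoint_sub hT hC hΦ.continuousOn hyc hCr,
          ← obsAdjoint_sub (p₁ := fun ρ => y ρ - C ρ *ᵥ r ρ) hT hC hΦ.continuousOn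
            (hyc.sub hCr) hCΦ]
        refine obsAdjoint_congr hT fun ρ hρ => ?_
        simp only [hq_eq hρ, ← hy ρ hρ, Matrix.mulVec_sub]
        abel

lemma integral_output_le_of_Psi_mulVec_eq (hT : t0 ≤ T) (hC : ContinuousOn C (Icc t0 T))
    (hΦ : ContinuousOn Φ (Icc t0 T)) {q : ℝ → Fin n → ℝ} (hq : ContinuousOn q (Icc t0 T))
    (hw : Psi n k0 t0 C Φ T *ᵥ w = obsAdjoint C Φ t0 T fun ρ => C ρ *ᵥ q ρ) :
    ∫ ρ in t0..T, (C ρ *ᵥ (Φ ρ *ᵥ w)) ⬝ᵥ (C ρ *ᵥ (Φ ρ *ᵥ w)) ≤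
      ∫ ρ in t0..T, (C ρ *ᵥ q ρ) ⬝ᵥ (C ρ *ᵥ q ρ) := by
  have hCΦ : ContinuousOn (fun ρ => C ρ *ᵥ (Φ ρ *ᵥ w)) (Icc t0 T) :=
    continuousOn_mulVec hC (continuousOn_mulVec hΦ continuousOn_const)
  have hCq := continuousOn_mulVec hC hq
  refine integral_dotProduct_self_le_of_eq hT hCΦ hCq ?_
  rw [← dotProduct_obsAdjoint hT hC hΦ hCΦ, ← dotProduct_obsAdjoint hT hC hΦ hCq,
    ← Psi_mulVec hT hC hΦ, hw]

end Observation

section ShortTimeLowerBound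

lemma eventually_forall_Ioc_of_eventually_nhdsGT {a : ℝ} {P : ℝ → Prop}
    (h : ∀ᶠ t in 𝓝[>] a, P t) : ∀ᶠ T in 𝓝[>] a, ∀ t ∈ Ioc a T, P t := by
  obtain ⟨u, hu, hsub⟩ := mem_nhdsGT_iff_exists_Ioc_subset.1 h
  filter_upwards [Ioc_mem_nhdsGT hu] with T hT t ht
  exact hsub ⟨ht.1, ht.2.trans hT.2⟩

lemma exists_pos_mul_norm_sq_le {E : Type*} [NormedAddCommGroup E] [NormedSpace ℝ E]
    [FiniteDimensional ℝ E] {J : E → ℝ} (hJc : Continuous J)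
    (hsmul : ∀ (c : ℝ) v, J (c • v) = c ^ 2 * J v) (hpos : ∀ v ≠ 0, 0 < J v) :
    ∃ c > 0, ∀ v, c * ‖v‖ ^ 2 ≤ J v := by
  have hJ0 : J 0 = 0 := by simpa using hsmul 0 0
  rcases subsingleton_or_nontrivial E with _ | _
  · exact ⟨1, one_pos, fun v => by simp [Subsingleton.elim v 0, hJ0]⟩
  have := FiniteDimensional.proper_real E
  obtain ⟨v₀, hv₀, hmin⟩ := (isCompact_sphere (0 : E) 1).exists_isMinOn
    (NormedSpace.sphere_nonempty.2 zero_le_one) hJc.continuousOn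
  refine ⟨J v₀, hpos v₀ (ne_zero_of_mem_unit_sphere ⟨v₀, hv₀⟩), fun v => ?_⟩
  rcases eq_or_ne v 0 with rfl | hv
  · simp [hJ0]
  have hunit : J v₀ ≤ ‖v‖⁻¹ ^ 2 * J v :=
    hsmul ‖v‖⁻¹ v ▸ hmin (by simp [norm_smul, hv])
  rwa [inv_pow, inv_mul_eq_div, le_div_iff₀ (by positivity)] at hunit

lemma exists_pos_mul_norm_sq_le_integral_sq {ι : Type*} [Fintype ι] {p : ι → ℝ → ℝ}
    (hp : ∀ j, Continuous (p j))
    (hindep : ∀ v : ι → ℝ, (∀ u ∈ Icc (0 : ℝ) 1, ∑ j, v j * p j u = 0) → v = 0) :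
    ∃ c > 0, ∀ v : ι → ℝ, c * ‖v‖ ^ 2 ≤ ∫ u in (0 : ℝ)..1, (∑ j, v j * p j u) ^ 2 := by
  refine exists_pos_mul_norm_sq_le
    (J := fun v : ι → ℝ => ∫ u in (0 : ℝ)..1, (∑ j, v j * p j u) ^ 2) ?_ ?_ ?_
  · exact intervalIntegral.continuous_parametric_intervalIntegral_of_continuous' (by fun_prop) 0 1
  · intro c v
    simp only [← intervalIntegral.integral_const_mul, ← mul_pow, Finset.mul_sum, Pi.smul_apply,
      smul_eq_mul, mul_assoc]
  · intro v hv
    obtain ⟨u, hu, hne⟩ : ∃ u ∈ Icc (0 : ℝ) 1, ∑ j, v j * p j u ≠ 0 := by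
      by_contra! h
      exact hv (hindep v h)
    exact intervalIntegral.integral_pos zero_lt_one (by fun_prop) (fun u _ => sq_nonneg _)
      ⟨u, hu, by positivity⟩

lemma eq_zero_of_sum_mul_pow_eq_zero {n : ℕ} {s : Set ℝ} (hs : s.Infinite) {v : Fin n → ℝ}
    (h : ∀ u ∈ s, ∑ j, v j * u ^ (j : ℕ) = 0) : v = 0 := by
  refine Matrix.eq_zero_of_forall_index_sum_mul_pow_eq_zero
    (f := fun i : Fin n => (hs.natEmbedding s i : ℝ)) ?_ fun i => h _ (hs.natEmbedding s i).2
  exact Subtype.val_injective.comp ((hs.natEmbedding s).injective.comp Fin.val_injective)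

lemma abs_sum_sub_sum_rescaled_le {n : ℕ} {h u η : ℝ} (hh : 0 < h) (hu : u ∈ Ioc 0 1)
    {φ γ : Fin n → ℝ} (hη : ∑ j, |φ j / (h * u) ^ (j : ℕ) - γ j| ≤ η) (w : Fin n → ℝ) :
    |∑ j, φ j * w j - ∑ j, w j * h ^ (j : ℕ) * (γ j * u ^ (j : ℕ))| ≤
      η * ‖fun j => w j * h ^ (j : ℕ)‖ := by
  have hterm (j : Fin n) : φ j * w j - w j * h ^ (j : ℕ) * (γ j * u ^ (j : ℕ)) =
      (φ j / (h * u) ^ (j : ℕ) - γ j) * (w j * h ^ (j : ℕ)) * u ^ (j : ℕ) := by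
    have := hu.1
    rw [mul_pow]
    field_simp
  rw [← Finset.sum_sub_distrib]
  refine (Finset.abs_sum_le_sum_abs _ _).trans
    (le_trans ?_ (mul_le_mul_of_nonneg_right hη (norm_nonneg _)))
  rw [Finset.sum_mul]
  refine Finset.sum_le_sum fun j _ => ?_
  rw [hterm, abs_mul, abs_mul, abs_of_pos (pow_pos hu.1 _)]
  exact (mul_le_of_le_one_right (by positivity) (pow_le_one₀ hu.1.le hu.2)).trans
    (mul_le_mul_of_nonneg_left (norm_le_pi_norm (fun j => w j * h ^ (j : ℕ)) j) (abs_nonneg _))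

lemma integral_eq_mul_integral_rescaled {t0 T : ℝ} (hT : t0 < T) (p : ℝ → ℝ) :
    ∫ s in t0..T, p s = (T - t0) * ∫ u in (0 : ℝ)..1, p (t0 + (T - t0) * u) := by
  rw [intervalIntegral.integral_comp_add_mul p (sub_pos.2 hT).ne' t0, smul_eq_mul,
    mul_inv_cancel_left₀ (sub_pos.2 hT).ne', mul_zero, add_zero, mul_one, add_sub_cancel]

lemma half_integral_sq_sub_le {p q : ℝ → ℝ} (hp : ContinuousOn p (Icc 0 1)) (hq : Continuous q)
    {e : ℝ} (h : ∀ u ∈ Ioo 0 1, |p u - q u| ≤ e) :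
    (∫ u in (0 : ℝ)..1, q u ^ 2) / 2 - e ^ 2 ≤ ∫ u in (0 : ℝ)..1, p u ^ 2 := by
  have hpt : ∀ u ∈ Ioo (0 : ℝ) 1, q u ^ 2 / 2 - e ^ 2 ≤ p u ^ 2 := by
    intro u hu
    have hsq : (p u - q u) ^ 2 ≤ e ^ 2 := sq_le_sq' (abs_le.1 (h u hu)).1 (abs_le.1 (h u hu)).2
    nlinarith [sq_nonneg (2 * p u - q u)]
  have hmono := intervalIntegral.integral_mono_on_of_le_Ioo (μ := volume) (zero_le_one' ℝ)
    (Continuous.intervalIntegrable (by fun_prop) _ _)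
    ((hp.pow 2).intervalIntegrable_of_Icc zero_le_one) hpt
  rw [intervalIntegral.integral_sub (Continuous.intervalIntegrable (by fun_prop) _ _)
    (Continuous.intervalIntegrable (by fun_prop) _ _), intervalIntegral.integral_div] at hmono
  simpa using hmono

-- On the time scale `h = T - t0`, the function `∑ φ_j w_j` is close to the polynomial
-- `∑ γ_j (w_j h ^ j) u ^ j` on `[0, 1]`, whose square integral dominates its coefficients.
lemma exists_pos_mul_norm_sq_le_integral_sq_of_tendsto {n : ℕ} {t0 τ : ℝ} (hτ : t0 < τ)
    {φ : Fin n → ℝ → ℝ} {γ : Fin n → ℝ} (hφ : ∀ j, ContinuousOn (φ j) (Icc t0 τ))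
    (hγ : ∀ j, γ j ≠ 0)
    (hlim : ∀ j, Tendsto (fun t => φ j t / (t - t0) ^ (j : ℕ)) (𝓝[>] t0) (𝓝 (γ j))) :
    ∃ c > 0, ∀ᶠ T in 𝓝[>] t0, ∀ w : Fin n → ℝ,
      c * (T - t0) * ‖fun j => w j * (T - t0) ^ (j : ℕ)‖ ^ 2 ≤
        ∫ s in t0..T, (∑ j, φ j s * w j) ^ 2 := by
  obtain ⟨c, hc, hpoly⟩ := exists_pos_mul_norm_sq_le_integral_sq
    (p := fun (j : Fin n) u => γ j * u ^ (j : ℕ)) (fun j => by fun_prop) fun v hv => by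
      have hvγ : (fun j => v j * γ j) = 0 := eq_zero_of_sum_mul_pow_eq_zero
        (Icc_infinite zero_lt_one) fun u hu => by simpa only [mul_assoc] using hv u hu
      exact funext fun j => (mul_eq_zero.1 (congrFun hvγ j)).resolve_right (hγ j)
  have hsum : Tendsto (fun t => ∑ j, |φ j t / (t - t0) ^ (j : ℕ) - γ j|) (𝓝[>] t0) (𝓝 0) := by
    simpa using tendsto_finsetSum Finset.univ fun j _ => ((hlim j).sub_const (γ j)).abs
  have hclose := eventually_forall_Ioc_of_eventually_nhdsGT
    (hsum.eventually_le_const (by positivity : 0 < √c / 2))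
  refine ⟨c / 4, by positivity, ?_⟩
  filter_upwards [hclose, Ioc_mem_nhdsGT hτ] with T hT hTτ w
  have hh : 0 < T - t0 := sub_pos.2 hTτ.1
  have hcont : ContinuousOn (fun u => ∑ j, φ j (t0 + (T - t0) * u) * w j) (Icc 0 1) := by
    refine continuousOn_finsetSum _ fun j _ => ContinuousOn.mul
      ((hφ j).comp (by fun_prop) fun u hu => ⟨?_, ?_⟩) continuousOn_const
    · nlinarith [hu.1]
    · nlinarith [hu.2, hTτ.2]
  have hbound := half_integral_sq_sub_le hcont
    (q := fun u => ∑ j, w j * (T - t0) ^ (j : ℕ) * (γ j * u ^ (j : ℕ))) (by fun_prop)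
    fun u hu => abs_sum_sub_sum_rescaled_le hh ⟨hu.1, hu.2.le⟩ (by
      simpa only [add_sub_cancel_left] using
        hT (t0 + (T - t0) * u) ⟨by nlinarith [hu.1], by nlinarith [hu.2]⟩) w
  rw [integral_eq_mul_integral_rescaled hTτ.1, mul_comm (c / 4), mul_assoc]
  refine mul_le_mul_of_nonneg_left (le_trans ?_ hbound) hh.le
  rw [mul_pow, div_pow, Real.sq_sqrt hc.le]
  linarith [hpoly fun j => w j * (T - t0) ^ (j : ℕ)]

lemma tendsto_integral_div_pow {t0 τ : ℝ} (hτ : t0 < τ) {r : ℝ → ℝ}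
    (hr : IntervalIntegrable r volume t0 τ) {k : ℕ} {c : ℝ}
    (hlim : Tendsto (fun s => r s / (s - t0) ^ k) (𝓝[>] t0) (𝓝 c)) :
    Tendsto (fun t => (∫ s in t0..t, r s) / (t - t0) ^ (k + 1)) (𝓝[>] t0) (𝓝 (c / (k + 1))) := by
  refine Metric.tendsto_nhds.2 fun ε hε => ?_
  filter_upwards [eventually_forall_Ioc_of_eventually_nhdsGT
    (Metric.tendsto_nhds.1 hlim (ε / 2) (half_pos hε)), Ioc_mem_nhdsGT hτ] with t hclose ht
  have hpos : 0 < t - t0 := sub_pos.2 ht.1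
  have hbound : ‖∫ s in t0..t, (r s - c * (s - t0) ^ k)‖ ≤ ε / 2 * (t - t0) ^ k * |t - t0| := by
    refine intervalIntegral.norm_integral_le_of_norm_le_const fun s hs => ?_
    rw [uIoc_of_le ht.1.le] at hs
    have hs0 : 0 < s - t0 := sub_pos.2 hs.1
    have hfactor : r s - c * (s - t0) ^ k = (r s / (s - t0) ^ k - c) * (s - t0) ^ k := by
      field_simp
    rw [hfactor, norm_mul, Real.norm_of_nonneg (pow_pos hs0 k).le]
    exact mul_le_mul (hclose s hs).le (pow_le_pow_left₀ hs0.le (by linarith [hs.2]) _)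
      (by positivity) (by positivity)
  have hpow : ∫ s in t0..t, c * (s - t0) ^ k = c / (k + 1) * (t - t0) ^ (k + 1) := by
    rw [intervalIntegral.integral_const_mul,
      intervalIntegral.integral_comp_sub_right (fun s => s ^ k), integral_pow, sub_self,
      zero_pow k.succ_ne_zero, sub_zero]
    ring
  rw [intervalIntegral.integral_sub (intervalIntegrable_of_mem_Icc hr (Ioc_subset_Icc_self ht))
    (Continuous.intervalIntegrable (by fun_prop) _ _), hpow, abs_of_pos hpos, mul_assoc,
    ← pow_succ, ← div_le_iff₀ (by positivity)] at hbound
  rw [Real.dist_eq, div_sub' (pow_pos hpos _).ne', abs_div, abs_of_pos (pow_pos hpos _), mul_comm]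
  exact hbound.trans_lt (half_lt_self hε)

end ShortTimeLowerBound

section TriangularSystem

variable {n : ℕ} {t0 τ T M : ℝ} {a : ℕ → ℝ → ℝ} {α : ℕ → ℝ}
  {Φ : ℝ → Matrix (Fin n) (Fin n) ℝ}

lemma triA_mulVec_apply (s : ℝ) (v : Fin n → ℝ) (i : Fin n) :
    (triA n a s *ᵥ v) i =
      if h : (i : ℕ) + 1 < n then a ((i : ℕ) + 2) s * v ⟨(i : ℕ) + 1, h⟩ else 0 := by
  simp only [Matrix.mulVec, dotProduct, triA, Matrix.of_apply, ite_mul, zero_mul]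
  split_ifs with h
  · rw [Finset.sum_eq_single_of_mem ⟨(i : ℕ) + 1, h⟩ (Finset.mem_univ _)
      fun j _ hj => if_neg fun hj' => hj (Fin.ext hj')]
    exact if_pos rfl
  · exact Finset.sum_eq_zero fun j _ => if_neg (by omega)

lemma triA_mul_apply (s : ℝ) (P : Matrix (Fin n) (Fin n) ℝ) (i j : Fin n) :
    (triA n a s * P) i j =
      if h : (i : ℕ) + 1 < n then a ((i : ℕ) + 2) s * P ⟨(i : ℕ) + 1, h⟩ j else 0 :=
  triA_mulVec_apply s (P.col j) i

lemma triC_mulVec [NeZero n] (v : Fin n → ℝ) : triC n *ᵥ v = fun _ => v 0 := by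
  ext i
  simp [Matrix.mulVec, dotProduct, triC, Fin.val_eq_zero_iff]

lemma norm_triA_mulVec_le (hM : 0 ≤ M) {s : ℝ} (ha : ∀ l, 2 ≤ l → l ≤ n → |a l s| ≤ M)
    (v : Fin n → ℝ) : ‖triA n a s *ᵥ v‖ ≤ M * ‖v‖ := by
  refine (pi_norm_le_iff_of_nonneg (by positivity)).2 fun i => ?_
  rw [triA_mulVec_apply]
  split_ifs with h
  · rw [norm_mul]
    exact mul_le_mul (ha _ (by omega) (by omega)) (norm_le_pi_norm v _) (norm_nonneg _) hM
  · rw [norm_zero]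
    positivity

lemma intervalIntegrable_triA (ha : ∀ l, 2 ≤ l → l ≤ n → IntervalIntegrable (a l) volume t0 T)
    (i j : Fin n) : IntervalIntegrable (fun s => triA n a s i j) volume t0 T := by
  by_cases h : (j : ℕ) = i + 1
  · simpa only [triA, Matrix.of_apply, if_pos h] using ha (i + 2) (by omega) (by omega)
  · simpa only [triA, Matrix.of_apply, if_neg h] using intervalIntegrable_const

lemma IsFundamental.triA_apply_of_le (hΦ : IsFundamental n t0 τ (triA n a) Φ) {i j : Fin n}
    (hji : j ≤ i) {t : ℝ} (ht : t ∈ Icc t0 τ) :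
    Φ t i j = (1 : Matrix (Fin n) (Fin n) ℝ) i j := by
  have hzero : EqOn (fun s => (triA n a s * Φ s) i j) 0 (Icc t0 t) := by
    intro s hs
    simp only [triA_mul_apply, Pi.zero_apply, dite_eq_right_iff]
    intro hi
    have hlt : j < ⟨i + 1, hi⟩ := Fin.lt_def.2 (Nat.lt_succ_of_le hji)
    rw [hΦ.triA_apply_of_le hlt.le ⟨hs.1, hs.2.trans ht.2⟩, Matrix.one_apply_ne hlt.ne', mul_zero]
  rw [hΦ.2 t ht i j, integral_congr_of_eqOn_Icc ht.1 hzero]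
  simp
termination_by n - i

lemma IsFundamental.isUnit_of_triA (hΦ : IsFundamental n t0 τ (triA n a) Φ) {t : ℝ}
    (ht : t ∈ Icc t0 τ) : IsUnit (Φ t) := by
  have hupper : (Φ t).IsUpperTriangular := fun i j (hji : j < i) => by
    rw [hΦ.triA_apply_of_le hji.le ht, Matrix.one_apply_ne hji.ne']
  have hdiag (i : Fin n) : Φ t i i = 1 := by
    rw [hΦ.triA_apply_of_le le_rfl ht, Matrix.one_apply_eq]
  rw [Matrix.isUnit_iff_isUnit_det, Matrix.det_of_isUpperTriangular hupper]
  simp [hdiag]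

lemma IsFundamental.exists_tendsto_triA_div_pow (hτ : t0 < τ)
    (ha : ∀ l, 2 ≤ l → l ≤ n → IntervalIntegrable (a l) volume t0 τ)
    (hα : ∀ l, 2 ≤ l → l ≤ n → Tendsto (a l) (𝓝[>] t0) (𝓝 (α l)) ∧ α l ≠ 0)
    (hΦ : IsFundamental n t0 τ (triA n a) Φ) {k : ℕ} {i j : Fin n} (hij : (i : ℕ) + k = j) :
    ∃ γ ≠ 0, Tendsto (fun t => Φ t i j / (t - t0) ^ k) (𝓝[>] t0) (𝓝 γ) := by
  induction k generalizing i with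
  | zero =>
    obtain rfl : i = j := Fin.ext hij
    refine ⟨1, one_ne_zero, tendsto_const_nhds.congr' ?_⟩
    filter_upwards [Ioc_mem_nhdsGT hτ] with t ht
    rw [hΦ.triA_apply_of_le le_rfl (Ioc_subset_Icc_self ht), Matrix.one_apply_eq, pow_zero, div_one]
  | succ k ih =>
    have hi : (i : ℕ) + 1 < n := by omega
    obtain ⟨γ, hγ, hlim⟩ := ih (i := ⟨i + 1, hi⟩) (by simp only; omega)
    obtain ⟨ha_lim, hα_ne⟩ := hα (i + 2) (by omega) (by omega)
    refine ⟨α (i + 2) * γ / (k + 1), by positivity, ?_⟩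
    have hint : IntervalIntegrable (fun s => a (i + 2) s * Φ s ⟨i + 1, hi⟩ j) volume t0 τ :=
      (ha (i + 2) (by omega) (by omega)).mul_continuousOn (by
        rw [uIcc_of_le hτ.le]
        exact hΦ.1 _ _)
    refine (tendsto_integral_div_pow hτ hint
      ((ha_lim.mul hlim).congr fun s => (mul_div_assoc _ _ _).symm)).congr' ?_
    filter_upwards [Ioc_mem_nhdsGT hτ] with t ht
    have hne : i ≠ j := Fin.ne_of_val_ne (by omega)
    rw [hΦ.2 t (Ioc_subset_Icc_self ht) i j, Matrix.one_apply_ne hne, zero_add]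
    simp only [triA_mul_apply, dif_pos hi]

lemma IsFundamental.exists_pos_le_integral_output_sq [NeZero n] (hτ : t0 < τ)
    (ha : ∀ l, 2 ≤ l → l ≤ n → IntervalIntegrable (a l) volume t0 τ)
    (hα : ∀ l, 2 ≤ l → l ≤ n → Tendsto (a l) (𝓝[>] t0) (𝓝 (α l)) ∧ α l ≠ 0)
    (hΦ : IsFundamental n t0 τ (triA n a) Φ) :
    ∃ c > 0, ∀ᶠ T in 𝓝[>] t0, ∀ w : Fin n → ℝ,
      c * (T - t0) * ‖fun j => w j * (T - t0) ^ (j : ℕ)‖ ^ 2 ≤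
        ∫ s in t0..T, (Φ s *ᵥ w) 0 ^ 2 := by
  choose γ hγ hlim using fun j : Fin n =>
    hΦ.exists_tendsto_triA_div_pow hτ ha hα (k := j) (i := 0) (j := j) (by simp)
  exact exists_pos_mul_norm_sq_le_integral_sq_of_tendsto hτ (fun j => hΦ.1 0 j) hγ hlim

lemma IsSolution.abs_triA_apply_le {β : ℝ} (hM : 0 ≤ M) (hβ : 0 ≤ β)
    (ha : ∀ t ∈ Icc t0 T, ∀ l, 2 ≤ l → l ≤ n → |a l t| ≤ M) {q b : ℝ → Fin n → ℝ}
    (hq : IsSolution n t0 T (triA n a) (fun s _ => b s) q) (hq0 : q t0 = 0)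
    (hb : ∀ t ∈ Icc t0 T, ∀ i : Fin n, |b t i| ≤ if (i : ℕ) = n - 1 then β else 0)
    {k : ℕ} {i : Fin n} (hik : (i : ℕ) + k + 1 = n) {t : ℝ} (ht : t ∈ Icc t0 T) :
    |q t i| ≤ M ^ k * β * (t - t0) ^ (k + 1) := by
  induction k generalizing i t with
  | zero =>
    have hbound : ‖∫ s in t0..t, ((triA n a s *ᵥ q s) i + b s i)‖ ≤ β * |t - t0| := by
      refine intervalIntegral.norm_integral_le_of_norm_le_const fun s hs => ?_
      rw [uIoc_of_le ht.1] at hs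
      rw [triA_mulVec_apply, dif_neg (by omega), zero_add]
      exact (hb s ⟨hs.1.le, hs.2.trans ht.2⟩ i).trans_eq (if_pos (by omega))
    simpa [hq.2 t ht i, hq0, abs_of_nonneg (sub_nonneg.2 ht.1)] using hbound
  | succ k ih =>
    have hi : (i : ℕ) + 1 < n := by omega
    have hbound : ‖∫ s in t0..t, ((triA n a s *ᵥ q s) i + b s i)‖ ≤
        M * (M ^ k * β * (t - t0) ^ (k + 1)) * |t - t0| := by
      refine intervalIntegral.norm_integral_le_of_norm_le_const fun s hs => ?_
      rw [uIoc_of_le ht.1] at hs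
      have hs' : s ∈ Icc t0 T := ⟨hs.1.le, hs.2.trans ht.2⟩
      have hbs : b s i = 0 := abs_nonpos_iff.1 ((hb s hs' i).trans_eq (if_neg (by omega)))
      have hpow : (s - t0) ^ (k + 1) ≤ (t - t0) ^ (k + 1) :=
        pow_le_pow_left₀ (sub_nonneg.2 hs'.1) (by linarith [hs.2]) _
      rw [triA_mulVec_apply, dif_pos hi, hbs, add_zero, norm_mul]
      exact mul_le_mul (ha s hs' _ (by omega) (by omega))
        ((ih (i := ⟨i + 1, hi⟩) (by simp only; omega) hs').trans
          (mul_le_mul_of_nonneg_left hpow (by positivity))) (norm_nonneg _) hM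
    have hqt : q t i = ∫ s in t0..t, ((triA n a s *ᵥ q s) i + b s i) := by
      rw [hq.2 t ht i, hq0, Pi.zero_apply, zero_add]
    rw [hqt, ← Real.norm_eq_abs]
    refine hbound.trans_eq ?_
    rw [abs_of_nonneg (sub_nonneg.2 ht.1)]
    ring

end TriangularSystem

section TriangularRegularity

variable {n : ℕ} {t0 τ T : ℝ} {a f : ℕ → ℝ → ℝ} {fn : ℝ → (Fin n → ℝ) → ℝ}

lemma TriRegular.mono (h : TriRegular n t0 τ a f fn) (hT : T ≤ τ) : TriRegular n t0 T a f fn := by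
  obtain ⟨ham, hab, hfm, hfb, hfnm, hfnc⟩ := h
  have hsub : Icc t0 T ⊆ Icc t0 τ := Icc_subset_Icc_right hT
  exact ⟨ham, fun l h₂ hn => (hab l h₂ hn).imp fun _ hM t ht => hM t (hsub ht), hfm,
    fun l h₁ hn => (hfb l h₁ hn).imp fun _ hM t ht => hM t (hsub ht), hfnm,
    fun t ht => hfnc t (hsub ht)⟩

lemma TriRegular.intervalIntegrable (h : TriRegular n t0 τ a f fn) (hτ : t0 ≤ τ) {l : ℕ}
    (hl : 2 ≤ l) (hln : l ≤ n) : IntervalIntegrable (a l) volume t0 τ :=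
  have ⟨_, hM⟩ := h.2.1 l hl hln
  intervalIntegrable_of_norm_le hτ (h.1 l hl hln).aestronglyMeasurable hM

lemma TriRegular.exists_abs_le (h : TriRegular n t0 τ a f fn) :
    ∃ M ≥ 1, ∀ t ∈ Icc t0 τ, ∀ l, 2 ≤ l → l ≤ n → |a l t| ≤ M := by
  have hbound : ∀ᶠ M : ℝ in atTop,
      ∀ l ∈ Finset.Icc 2 n, ∀ t ∈ Icc t0 τ, |a l t| ≤ M := by
    refine (Finset.eventually_all _).2 fun l hl => ?_
    obtain ⟨B, hB⟩ := h.2.1 l (Finset.mem_Icc.1 hl).1 (Finset.mem_Icc.1 hl).2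
    filter_upwards [eventually_ge_atTop B] with M hM t ht using (hB t ht).trans hM
  obtain ⟨M, hM1, hM⟩ := ((eventually_ge_atTop 1).and hbound).exists
  exact ⟨M, hM1, fun t ht l hl hln => hM l (Finset.mem_Icc.2 ⟨hl, hln⟩) t ht⟩

lemma TriRegular.intervalIntegrable_triG (h : TriRegular n t0 τ a f fn) (hτ : t0 ≤ τ)
    {z : ℝ → Fin n → ℝ} (hz : ContinuousOn z (Icc t0 τ)) {B : ℝ}
    (hB : ∀ t ∈ Icc t0 τ, |fn t (z t)| ≤ B) (i : Fin n) :
    IntervalIntegrable (fun s => triG n f fn s (z s) i) volume t0 τ := by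
  obtain ⟨-, -, hfm, hfb, hfnm, hfnc⟩ := h
  by_cases hi : (i : ℕ) = n - 1
  · simp only [triG, if_pos hi]
    exact intervalIntegrable_of_norm_le hτ (aemeasurable_comp_of_continuous measurableSet_Icc hfnm
      hfnc (hz.aemeasurable measurableSet_Icc)).aestronglyMeasurable hB
  · simp only [triG, if_neg hi]
    obtain ⟨M, hM⟩ := hfb (i + 1) (by omega) (by omega)
    exact intervalIntegrable_of_norm_le hτ
      (hfm (i + 1) (by omega) (by omega)).aestronglyMeasurable hM

lemma triG_sub_apply (t : ℝ) (u v : Fin n → ℝ) (i : Fin n) :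
    (triG n f fn t u - triG n f fn t v) i = if (i : ℕ) = n - 1 then fn t u - fn t v else 0 := by
  by_cases hi : (i : ℕ) = n - 1 <;> simp [triG, hi]

end TriangularRegularity

section ErrorBound

variable {n : ℕ} {t0 τ T M β c D : ℝ} {a : ℕ → ℝ → ℝ} {α : ℕ → ℝ}
  {Φ : ℝ → Matrix (Fin n) (Fin n) ℝ} {q b : ℝ → Fin n → ℝ} {w : Fin n → ℝ}

lemma IsSolution.norm_le_of_triA (hM : 1 ≤ M) (hβ : 0 ≤ β) (hT : T ≤ t0 + 1)
    (ha : ∀ t ∈ Icc t0 T, ∀ l, 2 ≤ l → l ≤ n → |a l t| ≤ M)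
    (hq : IsSolution n t0 T (triA n a) (fun s _ => b s) q) (hq0 : q t0 = 0)
    (hb : ∀ t ∈ Icc t0 T, ∀ i : Fin n, |b t i| ≤ if (i : ℕ) = n - 1 then β else 0)
    {t : ℝ} (ht : t ∈ Icc t0 T) : ‖q t‖ ≤ M ^ (n - 1) * β * (T - t0) := by
  have hM0 : 0 ≤ M := zero_le_one.trans hM
  have hh : 0 ≤ t - t0 := sub_nonneg.2 ht.1
  have hhT : 0 ≤ T - t0 := hh.trans (by linarith [ht.2])
  refine (pi_norm_le_iff_of_nonneg (by positivity)).2 fun i => ?_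
  refine (hq.abs_triA_apply_le hM0 hβ ha hq0 hb (k := n - 1 - i) (by omega) ht).trans ?_
  have hpow : (t - t0) ^ (n - 1 - i + 1) ≤ T - t0 :=
    (pow_le_of_le_one hh (by linarith [ht.2]) (by omega)).trans (by linarith [ht.2])
  exact mul_le_mul (mul_le_mul_of_nonneg_right (pow_le_pow_right₀ hM (Nat.sub_le _ _)) hβ) hpow
    (by positivity) (by positivity)

lemma norm_le_of_mul_norm_rescaled_sq_le {h : ℝ} (hc : 0 < c) (hD : 0 ≤ D) (hh : 0 < h)
    (hh1 : h ≤ 1) (hle : c * ‖fun j : Fin n => w j * h ^ (j : ℕ)‖ ^ 2 ≤ (D * h ^ n) ^ 2) :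
    ‖w‖ ≤ D / √c * h := by
  have hsqrt : 0 < √c := Real.sqrt_pos.2 hc
  have hnorm : √c * ‖fun j : Fin n => w j * h ^ (j : ℕ)‖ ≤ D * h ^ n := by
    refine (sq_le_sq₀ (by positivity) (by positivity)).1 ?_
    rwa [mul_pow, Real.sq_sqrt hc.le]
  refine (pi_norm_le_iff_of_nonneg (by positivity)).2 fun j => ?_
  have hj : √c * (‖w j‖ * h ^ (j : ℕ)) ≤ D * h ^ n := by
    refine le_trans (mul_le_mul_of_nonneg_left ?_ hsqrt.le) hnorm
    simpa [abs_of_pos hh] using norm_le_pi_norm (fun j : Fin n => w j * h ^ (j : ℕ)) j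
  have hpow : h ^ n ≤ h ^ (j : ℕ) * h := by
    rw [← pow_succ]
    exact pow_le_pow_of_le_one hh.le hh1 j.2
  rw [div_mul_eq_mul_div, le_div_iff₀ hsqrt]
  refine le_of_mul_le_mul_right ?_ (pow_pos hh (j : ℕ))
  calc ‖w j‖ * √c * h ^ (j : ℕ) = √c * (‖w j‖ * h ^ (j : ℕ)) := by ring
    _ ≤ D * (h ^ (j : ℕ) * h) := hj.trans (mul_le_mul_of_nonneg_left hpow hD)
    _ = D * h * h ^ (j : ℕ) := by ring

variable [NeZero n]

lemma triC_dotProduct_self (v : Fin n → ℝ) : (triC n *ᵥ v) ⬝ᵥ (triC n *ᵥ v) = v 0 ^ 2 := by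
  rw [triC_mulVec, dotProduct, Fin.sum_univ_one, sq]

lemma isUnit_Psi_triC (hT : t0 < T) (hΦ : ContinuousOn Φ (Icc t0 T)) (hc : 0 < c)
    (hlow : ∀ w : Fin n → ℝ, c * (T - t0) * ‖fun j => w j * (T - t0) ^ (j : ℕ)‖ ^ 2 ≤
      ∫ s in t0..T, (Φ s *ᵥ w) 0 ^ 2) :
    IsUnit (Psi n 1 t0 (fun _ => triC n) Φ T) := by
  have hh : 0 < T - t0 := sub_pos.2 hT
  refine isUnit_Psi_of_integral_pos hT.le continuousOn_const hΦ fun w hw => ?_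
  simp only [triC_dotProduct_self]
  refine lt_of_lt_of_le ?_ (hlow w)
  obtain ⟨j, hj⟩ := Function.ne_iff.1 hw
  have hne : (fun j => w j * (T - t0) ^ (j : ℕ)) ≠ 0 :=
    Function.ne_iff.2 ⟨j, mul_ne_zero hj (pow_pos hh _).ne'⟩
  have := norm_pos_iff.2 hne
  positivity

lemma norm_le_of_Psi_triC_mulVec_eq (hT : t0 < T) (hT1 : T ≤ t0 + 1)
    (hΦ : ContinuousOn Φ (Icc t0 T)) (hc : 0 < c) (hD : 0 ≤ D)
    (hlow : c * (T - t0) * ‖fun j => w j * (T - t0) ^ (j : ℕ)‖ ^ 2 ≤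
      ∫ s in t0..T, (Φ s *ᵥ w) 0 ^ 2)
    (hq : ContinuousOn q (Icc t0 T)) (hq_le : ∀ t ∈ Icc t0 T, |q t 0| ≤ D * (T - t0) ^ n)
    (hw : Psi n 1 t0 (fun _ => triC n) Φ T *ᵥ w =
      obsAdjoint (fun _ => triC n) Φ t0 T fun ρ => triC n *ᵥ q ρ) :
    ‖w‖ ≤ D / √c * (T - t0) := by
  have hh : 0 < T - t0 := sub_pos.2 hT
  refine norm_le_of_mul_norm_rescaled_sq_le hc hD hh (by linarith) ?_
  refine le_of_mul_le_mul_left ?_ hh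
  have henergy := integral_output_le_of_Psi_mulVec_eq hT.le continuousOn_const hΦ hq hw
  simp only [triC_dotProduct_self] at henergy
  calc (T - t0) * (c * ‖fun j => w j * (T - t0) ^ (j : ℕ)‖ ^ 2)
      = c * (T - t0) * ‖fun j => w j * (T - t0) ^ (j : ℕ)‖ ^ 2 := by ring
    _ ≤ ∫ s in t0..T, (Φ s *ᵥ w) 0 ^ 2 := hlow
    _ ≤ ∫ s in t0..T, q s 0 ^ 2 := henergy
    _ ≤ ∫ _ in t0..T, (D * (T - t0) ^ n) ^ 2 := by
        refine intervalIntegral.integral_mono_on hT.le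
          (((continuousOn_pi.1 hq 0).pow 2).intervalIntegrable_of_Icc hT.le)
          intervalIntegrable_const fun s hs => ?_
        exact sq_le_sq.2 ((hq_le s hs).trans (le_abs_self _))
    _ = (T - t0) * (D * (T - t0) ^ n) ^ 2 := by
        rw [intervalIntegral.integral_const, smul_eq_mul]

lemma IsFundamental.exists_norm_triA_error_le (hτ : t0 < τ) (hM : 1 ≤ M)
    (ha : ∀ t ∈ Icc t0 τ, ∀ l, 2 ≤ l → l ≤ n → |a l t| ≤ M)
    (haint : ∀ l, 2 ≤ l → l ≤ n → IntervalIntegrable (a l) volume t0 τ)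
    (hα : ∀ l, 2 ≤ l → l ≤ n → Tendsto (a l) (𝓝[>] t0) (𝓝 (α l)) ∧ α l ≠ 0)
    (hΦ : IsFundamental n t0 τ (triA n a) Φ) :
    ∃ Q, ∀ᶠ T in 𝓝[>] t0, IsUnit (Psi n 1 t0 (fun _ => triC n) Φ T) ∧
      ∀ (b q : ℝ → Fin n → ℝ) (w : Fin n → ℝ), ∀ β ≥ 0,
        (∀ t ∈ Icc t0 T, ∀ i : Fin n, |b t i| ≤ if (i : ℕ) = n - 1 then β else 0) →
        IsSolution n t0 T (triA n a) (fun s _ => b s) q → q t0 = 0 →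
        Psi n 1 t0 (fun _ => triC n) Φ T *ᵥ w =
          obsAdjoint (fun _ => triC n) Φ t0 T (fun ρ => triC n *ᵥ q ρ) →
        ∀ t ∈ Icc t0 T, ‖Φ t *ᵥ w - q t‖ ≤ Q * (T - t0) * β := by
  obtain ⟨F, hF0, hF⟩ := exists_norm_mulVec_le_of_continuousOn isCompact_Icc hΦ.continuousOn
  obtain ⟨c, hc, hlow⟩ := hΦ.exists_pos_le_integral_output_sq hτ haint hα
  refine ⟨(F / √c + 1) * M ^ (n - 1), ?_⟩
  filter_upwards [hlow, Ioc_mem_nhdsGT (lt_min hτ (lt_add_one t0))] with T hlow ⟨hT, hTmin⟩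
  obtain ⟨hTτ, hT1⟩ := le_min_iff.1 hTmin
  have hΦc := (hΦ.mono hTτ).continuousOn
  refine ⟨isUnit_Psi_triC hT hΦc hc hlow, fun b q w β hβ hb hq hq0 hw t ht => ?_⟩
  have haT : ∀ t ∈ Icc t0 T, ∀ l, 2 ≤ l → l ≤ n → |a l t| ≤ M :=
    fun t ht => ha t ⟨ht.1, ht.2.trans hTτ⟩
  have hn : 0 < n := Nat.pos_of_neZero n
  have hM0 : 0 ≤ M := zero_le_one.trans hM
  have hq_out (s : ℝ) (hs : s ∈ Icc t0 T) : |q s 0| ≤ M ^ (n - 1) * β * (T - t0) ^ n := by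
    have h := hq.abs_triA_apply_le hM0 hβ haT hq0 hb (k := n - 1) (i := 0)
      (by rw [Fin.val_zero]; omega) hs
    rw [Nat.sub_add_cancel hn] at h
    exact h.trans (mul_le_mul_of_nonneg_left
      (pow_le_pow_left₀ (sub_nonneg.2 hs.1) (by linarith [hs.2]) _) (by positivity))
  have hw_le : ‖w‖ ≤ M ^ (n - 1) * β / √c * (T - t0) :=
    norm_le_of_Psi_triC_mulVec_eq hT hT1 hΦc hc (by positivity) (hlow w) hq.1 hq_out hw
  calc ‖Φ t *ᵥ w - q t‖ ≤ ‖Φ t *ᵥ w‖ + ‖q t‖ := norm_sub_le _ _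
    _ ≤ F * (M ^ (n - 1) * β / √c * (T - t0)) + M ^ (n - 1) * β * (T - t0) :=
        add_le_add ((hF t ⟨ht.1, ht.2.trans hTτ⟩ w).trans (mul_le_mul_of_nonneg_left hw_le hF0))
          (hq.norm_le_of_triA hM hβ hT1 haT hq0 hb ht)
    _ = (F / √c + 1) * M ^ (n - 1) * (T - t0) * β := by ring

end ErrorBound

section Iteration

variable {E : Type*} [NormedAddCommGroup E] {t0 T r S : ℝ} {x : ℝ → E}

/-- Local contraction of an operator `F` on curves towards the curve `x`, in the supremum norm over
`[t0, T]`: within distance `r` of `x`, one application of `F` halves the distance to `x`. -/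
def HalvesErrorOn (F : (ℝ → E) → ℝ → E) (x : ℝ → E) (t0 T r : ℝ) : Prop :=
  ∀ z, ContinuousOn z (Icc t0 T) → ∀ S ≤ r, (∀ t ∈ Icc t0 T, ‖z t - x t‖ ≤ S) →
    ContinuousOn (F z) (Icc t0 T) ∧ ∀ t ∈ Icc t0 T, ‖F z t - x t‖ ≤ S / 2

lemma norm_iterate_sub_le_of_halvesErrorOn {F : ℕ → (ℝ → E) → ℝ → E} {u : ℕ → ℝ} {z : ℕ → ℝ → E}
    (hF : ∀ k, HalvesErrorOn (F k) x t0 (u k) r) (hu : Antitone u) (hS0 : 0 ≤ S) (hS : S ≤ r)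
    (hz0 : ContinuousOn (z 0) (Icc t0 (u 0))) (h0 : ∀ t ∈ Icc t0 (u 0), ‖z 0 t - x t‖ ≤ S)
    (hz : ∀ k, EqOn (z (k + 1)) (F k (z k)) (Icc t0 (u k))) (k : ℕ) :
    (∀ t ∈ Icc t0 (u k), ‖z k t - x t‖ ≤ (1 / 2) ^ k * S) ∧
      ∀ t ∈ Icc t0 (u k), ‖z (k + 1) t - x t‖ ≤ (1 / 2) ^ (k + 1) * S := by
  have hstep (k : ℕ) (hc : ContinuousOn (z k) (Icc t0 (u k)))
      (hk : ∀ t ∈ Icc t0 (u k), ‖z k t - x t‖ ≤ (1 / 2) ^ k * S) :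
      ContinuousOn (z (k + 1)) (Icc t0 (u k)) ∧
        ∀ t ∈ Icc t0 (u k), ‖z (k + 1) t - x t‖ ≤ (1 / 2) ^ (k + 1) * S := by
    have hle : (1 / 2) ^ k * S ≤ r :=
      (mul_le_of_le_one_left hS0 (pow_le_one₀ (by norm_num) (by norm_num))).trans hS
    obtain ⟨hFc, hFk⟩ := hF k (z k) hc _ hle hk
    refine ⟨hFc.congr (hz k), fun t ht => ?_⟩
    rw [hz k ht]
    exact (hFk t ht).trans_eq (by ring)
  have hmain (k : ℕ) : ContinuousOn (z k) (Icc t0 (u k)) ∧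
      ∀ t ∈ Icc t0 (u k), ‖z k t - x t‖ ≤ (1 / 2) ^ k * S := by
    induction k with
    | zero => exact ⟨hz0, by simpa using h0⟩
    | succ k ih =>
      have hsub : Icc t0 (u (k + 1)) ⊆ Icc t0 (u k) := Icc_subset_Icc_right (hu k.le_succ)
      obtain ⟨hc, hk⟩ := hstep k ih.1 ih.2
      exact ⟨hc.mono hsub, fun t ht => hk t (hsub ht)⟩
  exact ⟨(hmain k).2, (hstep k (hmain k).1 (hmain k).2).2⟩

lemma tendsto_apply_of_norm_sub_le {u ε : ℕ → ℝ} {z : ℕ → ℝ → E} {s : Set ℝ}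
    (hx : ContinuousWithinAt x s t0) (hus : ∀ k, u k ∈ s) (hu : Tendsto u atTop (𝓝 t0))
    (hε : Tendsto ε atTop (𝓝 0)) (h : ∀ k, ‖z k (u k) - x (u k)‖ ≤ ε k) :
    Tendsto (fun k => z k (u k)) atTop (𝓝 (x t0)) := by
  have hxu : Tendsto (fun k => x (u k)) atTop (𝓝 (x t0)) :=
    hx.tendsto.comp (tendsto_nhdsWithin_iff.2 ⟨hu, Eventually.of_forall hus⟩)
  simpa using (squeeze_zero_norm h hε).add hxu

lemma exists_seq_strictAnti_of_eventually_nhdsGT {p : ℝ → Prop} (h : ∀ᶠ T in 𝓝[>] t0, p T) :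
    ∃ u : ℕ → ℝ, StrictAnti u ∧ Tendsto u atTop (𝓝 t0) ∧ ∀ k, p (u k) := by
  obtain ⟨u, hu_anti, -, hu⟩ := exists_seq_strictAnti_tendsto_nhdsWithin t0
  obtain ⟨N, hN⟩ := eventually_atTop.1 (hu.eventually h)
  exact ⟨fun k => u (k + N), hu_anti.comp_strictMono fun _ _ hij => Nat.add_lt_add_right hij N,
    (tendsto_add_atTop_iff_nat N).2 (tendsto_nhds_of_tendsto_nhdsWithin hu),
    fun k => hN _ (Nat.le_add_left N k)⟩

end Iteration

section Reconstruction

variable {n : ℕ} {t0 τ T : ℝ} {a f : ℕ → ℝ → ℝ} {fn : ℝ → (Fin n → ℝ) → ℝ} {α : ℕ → ℝ}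
  {Φ : ℝ → Matrix (Fin n) (Fin n) ℝ}

lemma norm_le_supN {z : ℝ → Fin n → ℝ} (hz : ContinuousOn z (Icc t0 T)) {t : ℝ}
    (ht : t ∈ Icc t0 T) : ‖z t‖ ≤ supN n t0 T z := by
  obtain ⟨B, hB⟩ := isCompact_Icc.exists_bound_of_continuousOn hz
  exact le_ciSup (f := fun t : Icc t0 T => ‖z t‖)
    ⟨B, forall_mem_range.2 fun t => hB t t.2⟩ ⟨t, ht⟩

lemma supN_le (hT : t0 ≤ T) {z : ℝ → Fin n → ℝ} {S : ℝ} (h : ∀ t ∈ Icc t0 T, ‖z t‖ ≤ S) :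
    supN n t0 T z ≤ S :=
  have : Nonempty (Icc t0 T) := ⟨⟨t0, left_mem_Icc.2 hT⟩⟩
  ciSup_le fun t => h t t.2

variable [NeZero n]

lemma TriRegular.exists_norm_Fmap_sub_le (hτ : t0 < τ) (hreg : TriRegular n t0 τ a f fn)
    (hα : ∀ l, 2 ≤ l → l ≤ n → Tendsto (a l) (𝓝[>] t0) (𝓝 (α l)) ∧ α l ≠ 0)
    (hΦ : IsFundamental n t0 τ (triA n a) Φ) :
    ∃ Q, ∀ᶠ T in 𝓝[>] t0, IsUnit (Psi n 1 t0 (fun _ => triC n) Φ T) ∧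
      ∀ (y : ℝ → ℝ) (x z : ℝ → Fin n → ℝ) (B β : ℝ),
        IsSolution n t0 T (triA n a) (triG n f fn) x → (∀ t ∈ Icc t0 T, x t 0 = y t) →
        ContinuousOn z (Icc t0 T) → (∀ t ∈ Icc t0 T, |fn t (x t)| ≤ B) →
        (∀ t ∈ Icc t0 T, |fn t (z t)| ≤ B) →
        (∀ t ∈ Icc t0 T, |fn t (x t) - fn t (z t)| ≤ β) →
        ContinuousOn (Fmap n 1 t0 (fun _ => triC n) Φ (triG n f fn) (fun s _ => y s) T z)
          (Icc t0 T) ∧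
        ∀ t ∈ Icc t0 T,
          ‖Fmap n 1 t0 (fun _ => triC n) Φ (triG n f fn) (fun s _ => y s) T z t - x t‖ ≤
            Q * (T - t0) * β := by
  obtain ⟨M, hM, ha⟩ := hreg.exists_abs_le
  have hM0 : 0 ≤ M := zero_le_one.trans hM
  obtain ⟨Q, herr⟩ := hΦ.exists_norm_triA_error_le hτ hM ha
    (fun l => hreg.intervalIntegrable hτ.le) hα
  refine ⟨Q, ?_⟩
  filter_upwards [herr, Ioc_mem_nhdsGT hτ] with T ⟨hΨ, herr⟩ ⟨hT, hTτ⟩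
  refine ⟨hΨ, fun y x z B β hx hxy hz hBx hBz hβ => ?_⟩
  have hregT := hreg.mono hTτ
  have hΦT := hΦ.mono hTτ
  have hu (t : ℝ) (ht : t ∈ Icc t0 T) : IsUnit (Φ t) := hΦT.isUnit_of_triA ht
  have hA := intervalIntegrable_triA fun l => hregT.intervalIntegrable hT.le
  have hgx := hregT.intervalIntegrable_triG hT.le hx.1 hBx
  have hgz := hregT.intervalIntegrable_triG hT.le hz hBz
  set b : ℝ → Fin n → ℝ := fun s => triG n f fn s (x s) - triG n f fn s (z s)
  obtain ⟨w, hw, hΨw⟩ := exists_Fmap_sub_eq hT.le continuousOn_const hA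
    (fun s hs => norm_triA_mulVec_le hM0 (ha s ⟨hs.1, hs.2.trans hTτ⟩)) hΦT hu hΨ hx hgx hgz
    (y := fun s _ => y s) (fun ρ hρ => by rw [triC_mulVec, hxy ρ hρ]) rfl
  have hq : IsSolution n t0 T (triA n a) (fun s _ => b s) (forcedResponse Φ t0 b) :=
    hΦT.isSolution_forcedResponse hT.le hA hu fun i => (hgx i).sub (hgz i)
  have hb (t : ℝ) (ht : t ∈ Icc t0 T) (i : Fin n) :
      |b t i| ≤ if (i : ℕ) = n - 1 then β else 0 := by
    refine (congrArg abs (triG_sub_apply t (x t) (z t) i)).trans_le ?_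
    split_ifs
    exacts [hβ t ht, abs_zero.le]
  have hβ0 : 0 ≤ β := (abs_nonneg _).trans (hβ t0 (left_mem_Icc.2 hT.le))
  constructor
  · refine (hx.1.add ((continuousOn_mulVec hΦT.continuousOn (continuousOn_const (c := w))).sub
      hq.1)).congr fun t ht => ?_
    exact sub_eq_iff_eq_add'.1 (hw t ht)
  · intro t ht
    rw [hw t ht]
    exact herr b _ w β hβ0 hb hq forcedResponse_apply_left hΨw t ht

lemma TriRegular.eventually_halvesErrorOn_Fmap (hτ : t0 < τ) (hreg : TriRegular n t0 τ a f fn)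
    (hfnbdd : ∀ R > (0 : ℝ), ∃ M : ℝ, ∀ t ∈ Icc t0 τ, ∀ v, ‖v‖ ≤ R → |fn t v| ≤ M)
    (hα : ∀ l, 2 ≤ l → l ≤ n → Tendsto (a l) (𝓝[>] t0) (𝓝 (α l)) ∧ α l ≠ 0)
    (hfnLip : ∀ ρ > (0 : ℝ), ∃ L : ℝ, ∀ t ∈ Icc t0 τ, ∀ z₁ z₂,
      ‖z₁‖ ≤ ρ → ‖z₂‖ ≤ ρ → |fn t z₁ - fn t z₂| ≤ L * ‖z₁ - z₂‖)
    (hΦ : IsFundamental n t0 τ (triA n a) Φ) {R : ℝ} (hR : 0 < R) :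
    ∀ᶠ T in 𝓝[>] t0, IsUnit (Psi n 1 t0 (fun _ => triC n) Φ T) ∧
      ∀ (y : ℝ → ℝ) (x : ℝ → Fin n → ℝ), IsSolution n t0 τ (triA n a) (triG n f fn) x →
        (∀ t ∈ Icc t0 τ, x t 0 = y t) → (∀ t ∈ Icc t0 τ, ‖x t‖ ≤ R) →
        HalvesErrorOn (Fmap n 1 t0 (fun _ => triC n) Φ (triG n f fn) (fun s _ => y s) T)
          x t0 T (2 * R) := by
  obtain ⟨Q, herr⟩ := hreg.exists_norm_Fmap_sub_le hτ hα hΦ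
  obtain ⟨B, hB⟩ := hfnbdd (3 * R) (by positivity)
  obtain ⟨L, hL⟩ := hfnLip (3 * R) (by positivity)
  have hlim : Tendsto (fun T => Q * (T - t0) * |L|) (𝓝[>] t0) (𝓝 0) := by
    have hcont : Continuous fun T => Q * (T - t0) * |L| := by fun_prop
    exact tendsto_nhdsWithin_of_tendsto_nhds (hcont.tendsto' _ _ (by simp))
  filter_upwards [herr, Ioc_mem_nhdsGT hτ, hlim.eventually_le_const one_half_pos]
    with T ⟨hΨ, herr⟩ ⟨hT, hTτ⟩ hsmall
  refine ⟨hΨ, fun y x hx hxy hxR z hz S hS hzS => ?_⟩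
  have hsub : Icc t0 T ⊆ Icc t0 τ := Icc_subset_Icc_right hTτ
  have hx3 (t : ℝ) (ht : t ∈ Icc t0 T) : ‖x t‖ ≤ 3 * R := by linarith [hxR t (hsub ht)]
  have hz3 (t : ℝ) (ht : t ∈ Icc t0 T) : ‖z t‖ ≤ 3 * R := by
    linarith [norm_le_norm_add_norm_sub' (z t) (x t), hxR t (hsub ht), hzS t ht]
  have hdiff (t : ℝ) (ht : t ∈ Icc t0 T) : |fn t (x t) - fn t (z t)| ≤ |L| * S := by
    refine (hL t (hsub ht) _ _ (hx3 t ht) (hz3 t ht)).trans ?_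
    rw [norm_sub_rev]
    exact mul_le_mul (le_abs_self L) (hzS t ht) (norm_nonneg _) (abs_nonneg L)
  obtain ⟨hFc, hF⟩ := herr y x z B (|L| * S) (hx.mono hTτ) (fun t ht => hxy t (hsub ht)) hz
    (fun t ht => hB t (hsub ht) _ (hx3 t ht)) (fun t ht => hB t (hsub ht) _ (hz3 t ht)) hdiff
  have hS0 : 0 ≤ S := (norm_nonneg _).trans (hzS t0 (left_mem_Icc.2 hT.le))
  refine ⟨hFc, fun t ht => (hF t ht).trans ?_⟩
  calc Q * (T - t0) * (|L| * S) = Q * (T - t0) * |L| * S := by ring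
    _ ≤ 1 / 2 * S := mul_le_mul_of_nonneg_right hsmall hS0
    _ = S / 2 := by ring

end Reconstruction

theorem stmt2_general {n : ℕ} [NeZero n] {t0 τ : ℝ} (ht : t0 < τ)
    {a f : ℕ → ℝ → ℝ} {fn : ℝ → (Fin n → ℝ) → ℝ} (hreg : TriRegular n t0 τ a f fn)
    (hfnbdd : ∀ R > (0 : ℝ), ∃ M : ℝ, ∀ t ∈ Icc t0 τ, ∀ v, ‖v‖ ≤ R → |fn t v| ≤ M)
    {α : ℕ → ℝ} (hα : ∀ l, 2 ≤ l → l ≤ n → Tendsto (a l) (𝓝[>] t0) (𝓝 (α l)) ∧ α l ≠ 0)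
    (hfnLip : ∀ ρ > (0 : ℝ), ∃ L : ℝ, ∀ t ∈ Icc t0 τ, ∀ z₁ z₂,
      ‖z₁‖ ≤ ρ → ‖z₂‖ ≤ ρ → |fn t z₁ - fn t z₂| ≤ L * ‖z₁ - z₂‖)
    {Φ : ℝ → Matrix (Fin n) (Fin n) ℝ} (hΦ : IsFundamental n t0 τ (triA n a) Φ)
    {R : ℝ} (hR : 0 < R) :
    ∃ tseq : ℕ → ℝ, (∀ ν, tseq ν ∈ Ioc t0 τ) ∧ StrictAnti tseq ∧ Tendsto tseq atTop (𝓝 t0) ∧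
      (∀ ν, IsUnit (Psi n 1 t0 (fun _ => triC n) Φ (tseq ν))) ∧
      ∀ (y : ℝ → ℝ) (x : ℝ → Fin n → ℝ), IsSolution n t0 τ (triA n a) (triG n f fn) x →
        (∀ t ∈ Icc t0 τ, x t 0 = y t) → supN n t0 τ x < R →
        ∀ z : ℕ → ℝ → Fin n → ℝ, ContinuousOn (z 1) (Icc t0 (tseq 1)) →
          supN n t0 (tseq 1) (z 1) < R →
          (∀ ν ≥ 1, EqOn (z (ν + 1))
            (Fmap n 1 t0 (fun _ => triC n) Φ (triG n f fn) (fun s _ => y s) (tseq ν) (z ν))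
            (Icc t0 (tseq ν))) →
          (∀ ν ≥ 1, supN n t0 (tseq ν) (fun t => z (ν + 1) t - x t) ≤
            (1 / 2) ^ ν * supN n t0 (tseq 1) (fun t => z 1 t - x t)) ∧
          Tendsto (fun ν => z ν (tseq ν)) atTop (𝓝 (x t0)) := by
  obtain ⟨u, hu_anti, hu_lim, hu⟩ := exists_seq_strictAnti_of_eventually_nhdsGT
    ((hreg.eventually_halvesErrorOn_Fmap ht hfnbdd hα hfnLip hΦ hR).and (Ioc_mem_nhdsGT ht))
  refine ⟨u, fun ν => (hu ν).2, hu_anti, hu_lim, fun ν => (hu ν).1.1,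
    fun y x hx hxy hxR z hz1 hzR hz => ?_⟩
  have hle (ν : ℕ) : t0 ≤ u ν := (hu ν).2.1.le
  have hx1 : ContinuousOn x (Icc t0 (u 1)) := hx.1.mono (Icc_subset_Icc_right (hu 1).2.2)
  have hxb (t : ℝ) (ht : t ∈ Icc t0 τ) : ‖x t‖ ≤ R := (norm_le_supN hx.1 ht).trans hxR.le
  set S := supN n t0 (u 1) fun t => z 1 t - x t
  have h0 (t : ℝ) (ht : t ∈ Icc t0 (u 1)) : ‖z 1 t - x t‖ ≤ S := norm_le_supN (hz1.sub hx1) ht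
  have hS0 : 0 ≤ S := (norm_nonneg _).trans (h0 t0 (left_mem_Icc.2 (hle 1)))
  have hS : S ≤ 2 * R := supN_le (hle 1) fun t ht => by
    linarith [norm_sub_le (z 1 t) (x t), norm_le_supN hz1 ht,
      hxb t (Icc_subset_Icc_right (hu 1).2.2 ht)]
  have hiter := norm_iterate_sub_le_of_halvesErrorOn (z := fun k => z (k + 1))
    (fun k => (hu (k + 1)).1.2 y x hx hxy hxb)
    (fun i j hij => hu_anti.antitone (Nat.add_le_add_right hij 1)) hS0 hS hz1 h0
    fun k => hz (k + 1) (Nat.le_add_left 1 k)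
  refine ⟨fun ν hν => supN_le (hle ν) ?_, ?_⟩
  · obtain ⟨k, rfl⟩ := Nat.exists_eq_add_of_le' hν
    exact (hiter k).2
  · have hε : Tendsto (fun k => (1 / 2 : ℝ) ^ k * S) atTop (𝓝 0) := by
      simpa using (tendsto_pow_atTop_nhds_zero_of_lt_one (by norm_num : (0 : ℝ) ≤ 1 / 2)
        (by norm_num)).mul_const S
    exact (tendsto_add_atTop_iff_nat 1).1 <| tendsto_apply_of_norm_sub_le
      (hx.1 t0 (left_mem_Icc.2 ht.le)) (fun k => Ioc_subset_Icc_self (hu (k + 1)).2)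
      ((tendsto_add_atTop_iff_nat 1).2 hu_lim) hε
      fun k => (hiter k).1 _ (right_mem_Icc.2 (hle (k + 1)))

theorem stmt2 (n : ℕ) (hn : 2 ≤ n) (t0 τ : ℝ) (ht : t0 < τ)
    (a f : ℕ → ℝ → ℝ) (fn : ℝ → (Fin n → ℝ) → ℝ)
    (hreg : TriRegular n t0 τ a f fn)
    (hfnbdd : ∀ R > (0:ℝ), ∃ M : ℝ, ∀ t ∈ Set.Icc t0 τ, ∀ v : Fin n → ℝ,
      ‖v‖ ≤ R → |fn t v| ≤ M)
    (α : ℕ → ℝ)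
    (hα : ∀ l, 2 ≤ l → l ≤ n →
      Filter.Tendsto (a l) (nhdsWithin t0 (Set.Ioi t0)) (nhds (α l)) ∧ α l ≠ 0)
    (hfnLip : ∀ ρ > (0:ℝ), ∃ L : ℝ, ∀ t ∈ Set.Icc t0 τ, ∀ z1 z2 : Fin n → ℝ,
      ‖z1‖ ≤ ρ → ‖z2‖ ≤ ρ → |fn t z1 - fn t z2| ≤ L * ‖z1 - z2‖)
    (Φ : ℝ → Matrix (Fin n) (Fin n) ℝ) (hΦ : IsFundamental n t0 τ (triA n a) Φ)
    (y : ℝ → ℝ) (hy_cont : ContinuousOn y (Set.Icc t0 τ))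
    (hy_out : ∃ x0 : ℝ → (Fin n → ℝ), IsSolution n t0 τ (triA n a) (triG n f fn) x0 ∧
      ∀ t ∈ Set.Icc t0 τ, x0 t ⟨0, by omega⟩ = y t) :
    ∀ R > (0:ℝ), ∃ tseq : ℕ → ℝ,
      (∀ ν : ℕ, 1 ≤ ν → tseq ν ∈ Set.Ioc t0 τ) ∧
      (∀ ν : ℕ, 1 ≤ ν → tseq (ν + 1) < tseq ν) ∧
      Filter.Tendsto tseq Filter.atTop (nhds t0) ∧
      (∀ ν : ℕ, 1 ≤ ν → IsUnit (Psi n 1 t0 (fun _ => triC n) Φ (tseq ν))) ∧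
      (∀ x : ℝ → (Fin n → ℝ),
        IsSolution n t0 τ (triA n a) (triG n f fn) x →
        (∀ t ∈ Set.Icc t0 τ, x t ⟨0, by omega⟩ = y t) →
        supN n t0 τ x < R →
        ∀ z : ℕ → ℝ → (Fin n → ℝ),
          ContinuousOn (z 1) (Set.Icc t0 (tseq 1)) →
          supN n t0 (tseq 1) (z 1) < R →
          (∀ ν : ℕ, 1 ≤ ν → ∀ t ∈ Set.Icc t0 (tseq ν),
            z (ν + 1) t = Fmap n 1 t0 (fun _ => triC n) Φ (triG n f fn)
              (fun s _ => y s) (tseq ν) (z ν) t) →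
          (∀ ν : ℕ, 1 ≤ ν →
            supN n t0 (tseq ν) (fun t => z (ν + 1) t - x t)
              ≤ (1/2 : ℝ) ^ ν * supN n t0 (tseq 1) (fun t => z 1 t - x t)) ∧
          Filter.Tendsto (fun ν => z ν (tseq ν)) Filter.atTop (nhds (x t0))) := by
  have : NeZero n := ⟨by omega⟩
  intro R hR
  obtain ⟨tseq, hmem, hanti, hlim, hΨ, hconv⟩ :=
    stmt2_general ht hreg hfnbdd hα hfnLip hΦ hR
  exact ⟨tseq, fun ν _ => hmem ν, fun ν _ => hanti ν.lt_succ_self, hlim, fun ν _ => hΨ ν,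
    hconv y⟩
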